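/- arXiv:1001.4254 — 4 statements merged into one kernel-verified Lean document; each statement's English description precedes it below -/
import Mathlib

section
/- Let f be a measurable function on ℝ^n that is finite almost everywhere and let Q be a cube. Then every median value m_f(Q) of f on Q satisfies |m_f(Q)| ≤ (fχ_Q)*(|Q|/2), where g* denotes the non-increasing rearrangement of g. -/
/-!
If `α < |m|` and `|{|f χ_Q| > α}| < |Q|/2`, then `Q` is covered by `{|f χ_Q| > α}` together with
`{x ∈ Q : f x < m}` (when `m ≥ 0`) or `{x ∈ Q : f x > m}` (when `m < 0`). Since `m` is a median,
the second set has measure at most `|Q|/2`, so `|Q| < |Q|/2 + |Q|/2`, which is absurd. Hence every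
`α` competing in the infimum defining `(f χ_Q)*(|Q|/2)` is at least `|m|`.
-/

open MeasureTheory Set Filter
open scoped ENNReal Topology

/-- A cube in `ℝ^n` with sides parallel to the axes. -/
def IsCube (n : ℕ) (Q : Set (Fin n → ℝ)) : Prop :=
  ∃ (a : Fin n → ℝ) (l : ℝ), 0 < l ∧
    Q = Set.univ.pi fun i => Set.Ico (a i) (a i + l)

/-- The non-increasing rearrangement `g*(t) = inf{α > 0 : |{|g| > α}| < t}`,
valued in `ℝ≥0∞` (with value `∞` if no such `α` exists). -/
noncomputable def rearr (n : ℕ) (g : (Fin n → ℝ) → ℝ) (t : ℝ≥0∞) : ℝ≥0∞ :=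
  sInf {l : ℝ≥0∞ | ∃ α : ℝ, 0 < α ∧ l = ENNReal.ofReal α ∧
    volume {x : Fin n → ℝ | α < |g x|} < t}

/-- `m` is a median value of `f` on `Q`:
`max(|{x ∈ Q : f x > m}|, |{x ∈ Q : f x < m}|) ≤ |Q|/2`. -/
def IsMedian (n : ℕ) (f : (Fin n → ℝ) → ℝ) (Q : Set (Fin n → ℝ)) (m : ℝ) : Prop :=
  volume {x : Fin n → ℝ | x ∈ Q ∧ m < f x} ≤ volume Q / 2 ∧
  volume {x : Fin n → ℝ | x ∈ Q ∧ f x < m} ≤ volume Q / 2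

theorem IsCube.volume_ne_top {n : ℕ} {Q : Set (Fin n → ℝ)} (hQ : IsCube n Q) :
    volume Q ≠ ∞ := by
  obtain ⟨a, l, -, rfl⟩ := hQ
  rw [volume_pi_pi]
  exact ENNReal.prod_ne_top fun i _ => by simp

/-- A set of finite measure is not covered by one set of measure at most half of its own and
another of measure strictly less than half. -/
theorem not_subset_union_of_le_half_of_lt_half {n : ℕ} {Q A B : Set (Fin n → ℝ)}
    (hQ : volume Q ≠ ∞) (hA : volume A ≤ volume Q / 2) (hB : volume B < volume Q / 2) :
    ¬ Q ⊆ A ∪ B := fun hsub => by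
  have hfin : volume A ≠ ∞ := ne_top_of_le_ne_top (ENNReal.div_ne_top hQ two_ne_zero) hA
  have hlt : volume Q < volume Q := calc
    volume Q ≤ volume A + volume B := (measure_mono hsub).trans (measure_union_le A B)
    _ < volume Q / 2 + volume Q / 2 := ENNReal.add_lt_add_of_le_of_lt hfin hA hB
    _ = volume Q := ENNReal.add_halves _
  exact hlt.false

/-- Every median value of a measurable function `f` on a cube `Q` satisfies
`|m_f(Q)| ≤ (f χ_Q)*(|Q|/2)`. -/
theorem median_le_rearrangement (n : ℕ) (f : (Fin n → ℝ) → ℝ) (hf : Measurable f)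
    (Q : Set (Fin n → ℝ)) (hQ : IsCube n Q) (m : ℝ) (hm : IsMedian n f Q m) :
    ENNReal.ofReal |m| ≤ rearr n (Q.indicator f) (volume Q / 2) := by
  refine le_sInf ?_
  rintro _ ⟨α, -, rfl, hα⟩
  refine ENNReal.ofReal_le_ofReal (le_of_not_gt fun hlt => ?_)
  rcases le_or_gt 0 m with h0 | h0
  · rw [abs_of_nonneg h0] at hlt
    refine not_subset_union_of_le_half_of_lt_half hQ.volume_ne_top hm.2 hα fun x hx => ?_
    rcases lt_or_ge (f x) m with h | h
    · exact Or.inl ⟨hx, h⟩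
    · right
      simp only [mem_setOf_eq, indicator_of_mem hx]
      exact (hlt.trans_le h).trans_le (le_abs_self _)
  · rw [abs_of_neg h0] at hlt
    refine not_subset_union_of_le_half_of_lt_half hQ.volume_ne_top hm.1 hα fun x hx => ?_
    rcases lt_or_ge m (f x) with h | h
    · exact Or.inl ⟨hx, h⟩
    · right
      simp only [mem_setOf_eq, indicator_of_mem hx]
      exact (hlt.trans_le (neg_le_neg h)).trans_le (neg_le_abs _)
end

section
/- Let f(x) = Σ_{j=0}^∞ χ_{(2^{-2j-1}, 2^{-2j})}(x) on ℝ. Then ‖f‖_{L^p(ℝ)} = (2/3)^{1/p} ≤ 1 for every 1≤p<∞, and there exists an absolute constant c>0 such that for every 1<p<∞, ‖S_d f‖_{L^p(ℝ)} ≥ c·p^{1/2}·‖f‖_{L^p(ℝ)}, where S_d is the dyadic square function. -/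
/-!
The function `exampleFn` is the indicator of the disjoint union of the intervals
`J j = (4⁻ʲ / 2, 4⁻ʲ)`, whose total length is `∑ 4⁻ʲ / 2 = 2 / 3`; this gives its `L^p` norm.

The part of this union inside `[0, 2⁻ᵏ)` is a tail `⋃_{j ≥ n} J j`, so the average of `exampleFn`
over `[0, 2⁻ᵏ)`, `k ≥ 0`, is `2 / 3` for even `k` and `1 / 3` for odd `k` (`avg_even`, `avg_odd`).
Consecutive averages thus differ by `1 / 3`, and on `[0, 2⁻ⁿ)` the `n` intervals `[0, 2⁻ᵏ)`,
`1 ≤ k ≤ n`, give `S_d f ≥ √(n / 9)` (`dySq1_lower`). Hence `‖S_d f‖_p ≥ 2^{-n/p} √n / 3`, and the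
choice `n = ⌈p⌉ ∈ [p, 2p]` yields the bound with `c = 1 / 12`.
-/

open MeasureTheory Set Filter
open scoped ENNReal Topology

/-- The dyadic interval `2^{-k}[m, m+1)`. -/
def dyI (k m : ℤ) : Set ℝ :=
  Set.Ico ((2 : ℝ) ^ (-k) * m) ((2 : ℝ) ^ (-k) * (m + 1))

/-- The average of `f` over the dyadic interval `2^{-k}[m, m+1)`. -/
noncomputable def avgI (k m : ℤ) (f : ℝ → ℝ) : ℝ := ⨍ x in dyI k m, f x

/-- The dyadic square function on `ℝ` (as an extended nonnegative real);
the dyadic parent of `dyI k m` is `dyI (k-1) ⌊m/2⌋`. -/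
noncomputable def dySq1 (f : ℝ → ℝ) (x : ℝ) : ℝ≥0∞ :=
  (∑' km : ℤ × ℤ,
      ENNReal.ofReal ((dyI km.1 km.2).indicator
        (fun _ => (avgI km.1 km.2 f - avgI (km.1 - 1) (Int.fdiv km.2 2) f) ^ 2)
        x)) ^ (1 / 2 : ℝ)

/-- The function `f = Σ_{j≥0} χ_{(2^{-2j-1}, 2^{-2j})}`. -/
noncomputable def exampleFn : ℝ → ℝ := fun x =>
  ∑' j : ℕ, (Set.Ioo ((2 : ℝ) ^ (-(2 * (j : ℤ)) - 1)) ((2 : ℝ) ^ (-(2 * (j : ℤ))))).indicator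
    1 x

/-- The interval `(4⁻ʲ / 2, 4⁻ʲ) = (2^{-2j-1}, 2^{-2j})`. -/
def J (j : ℕ) : Set ℝ := Ioo ((1 / 4 : ℝ) ^ j / 2) ((1 / 4 : ℝ) ^ j)

/-- The tail `⋃_{j ≥ n} J j`, with the index shifted to start at `0`. -/
def V (n : ℕ) : Set ℝ := ⋃ j : ℕ, J (n + j)

lemma quarter_zpow (j : ℕ) : (2 : ℝ) ^ (-(2 * (j : ℤ))) = (1 / 4 : ℝ) ^ j := by
  rw [zpow_neg, zpow_mul, zpow_natCast, ← inv_pow]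
  norm_num

lemma half_quarter_zpow (j : ℕ) : (2 : ℝ) ^ (-(2 * (j : ℤ)) - 1) = (1 / 4 : ℝ) ^ j / 2 := by
  rw [zpow_sub₀ (by norm_num), quarter_zpow, zpow_one]

lemma quarter_pow_le {i j : ℕ} (h : i < j) : (1 / 4 : ℝ) ^ j ≤ (1 / 4 : ℝ) ^ i / 4 := by
  have : (1 / 4 : ℝ) ^ j ≤ (1 / 4 : ℝ) ^ (i + 1) :=
    pow_le_pow_of_le_one (by norm_num) (by norm_num) h
  rw [pow_succ] at this
  linarith

lemma J_index_unique {i j : ℕ} {x : ℝ} (hi : x ∈ J i) (hj : x ∈ J j) : i = j := by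
  have hp : ∀ n : ℕ, 0 < (1 / 4 : ℝ) ^ n := fun n => by positivity
  rcases lt_trichotomy i j with h | h | h
  · have := quarter_pow_le h
    linarith [hi.1, hj.2, hp i]
  · exact h
  · have := quarter_pow_le h
    linarith [hi.2, hj.1, hp j]

lemma exampleFn_eq : exampleFn = (V 0).indicator 1 := by
  funext x
  have h0 : exampleFn x = ∑' j : ℕ, (J j).indicator (1 : ℝ → ℝ) x := by
    simp only [exampleFn, quarter_zpow, half_quarter_zpow, J]
  rw [h0]
  by_cases hx : x ∈ V 0
  · obtain ⟨j, hj⟩ := mem_iUnion.1 hx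
    rw [zero_add] at hj
    rw [tsum_eq_single j, indicator_of_mem hj, indicator_of_mem hx]
    intro i hi
    exact indicator_of_notMem (fun h => hi (J_index_unique h hj)) _
  · rw [indicator_of_notMem hx]
    have : ∀ j, (J j).indicator (1 : ℝ → ℝ) x = 0 := fun j =>
      indicator_of_notMem (fun h => hx (mem_iUnion.2 ⟨j, by simpa using h⟩)) _
    simp [this]

lemma measurableSet_V (n : ℕ) : MeasurableSet (V n) :=
  MeasurableSet.iUnion fun _ => measurableSet_Ioo

lemma volume_V (n : ℕ) : volume.real (V n) = 2 / 3 * (1 / 4 : ℝ) ^ n := by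
  have hs : HasSum (fun j : ℕ => (1 / 4 : ℝ) ^ (n + j) / 2) (2 / 3 * (1 / 4 : ℝ) ^ n) := by
    have h := (hasSum_geometric_of_lt_one (r := (1 / 4 : ℝ)) (by norm_num)
      (by norm_num)).mul_left ((1 / 4 : ℝ) ^ n / 2)
    have e1 : (fun j : ℕ => (1 / 4 : ℝ) ^ (n + j) / 2)
        = fun j => (1 / 4 : ℝ) ^ n / 2 * (1 / 4 : ℝ) ^ j := by
      funext j
      rw [pow_add]
      ring
    have e2 : 2 / 3 * (1 / 4 : ℝ) ^ n = (1 / 4 : ℝ) ^ n / 2 * (1 - 1 / 4 : ℝ)⁻¹ := by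
      norm_num
      ring
    rw [e1, e2]
    exact h
  have hd : Pairwise (Function.onFun Disjoint fun j => J (n + j)) := by
    intro i j hij
    refine Set.disjoint_left.2 fun x hi hj => hij ?_
    have := J_index_unique hi hj
    omega
  have hv : volume (V n) = ENNReal.ofReal (2 / 3 * (1 / 4 : ℝ) ^ n) := by
    rw [V, measure_iUnion hd (fun _ => measurableSet_Ioo), ← hs.tsum_eq,
      ENNReal.ofReal_tsum_of_nonneg (fun j => by positivity) hs.summable]
    congr 1
    funext j
    rw [J, Real.volume_Ioo]
    congr 1
    ring
  rw [Measure.real, hv, ENNReal.toReal_ofReal (by positivity)]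

lemma V_inter_even (n : ℕ) : V 0 ∩ Ico 0 ((1 / 4 : ℝ) ^ n) = V n := by
  have hp : ∀ n : ℕ, 0 < (1 / 4 : ℝ) ^ n := fun n => by positivity
  ext x
  simp only [V, mem_inter_iff, mem_iUnion, zero_add]
  constructor
  · rintro ⟨⟨j, hj⟩, -, hx⟩
    have hnj : n ≤ j := by
      by_contra! h
      linarith [quarter_pow_le h, hj.1, hp j]
    exact ⟨j - n, by rwa [Nat.add_sub_cancel' hnj]⟩
  · rintro ⟨j, hj⟩
    refine ⟨⟨_, hj⟩, by linarith [hj.1, hp (n + j)], hj.2.trans_le ?_⟩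
    exact pow_le_pow_of_le_one (by norm_num) (by norm_num) (by omega)

lemma V_inter_odd (n : ℕ) : V 0 ∩ Ico 0 ((1 / 4 : ℝ) ^ n / 2) = V (n + 1) := by
  have hp : ∀ n : ℕ, 0 < (1 / 4 : ℝ) ^ n := fun n => by positivity
  ext x
  simp only [V, mem_inter_iff, mem_iUnion, zero_add]
  constructor
  · rintro ⟨⟨j, hj⟩, -, hx⟩
    have hnj : n + 1 ≤ j := by
      by_contra! h
      have : (1 / 4 : ℝ) ^ n ≤ (1 / 4 : ℝ) ^ j :=
        pow_le_pow_of_le_one (by norm_num) (by norm_num) (by omega)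
      linarith [hj.1, hp j]
    exact ⟨j - (n + 1), by rwa [Nat.add_sub_cancel' hnj]⟩
  · rintro ⟨j, hj⟩
    refine ⟨⟨_, hj⟩, by linarith [hj.1, hp (n + 1 + j)], hj.2.trans_le ?_⟩
    have := quarter_pow_le (show n < n + 1 + j by omega)
    linarith [hp n]

lemma avg_Ico (a : ℝ) (ha : 0 ≤ a) :
    ⨍ x in Ico 0 a, exampleFn x = volume.real (V 0 ∩ Ico 0 a) / a := by
  rw [setAverage_eq, exampleFn_eq, integral_indicator_one (measurableSet_V 0),
    measureReal_restrict_apply (measurableSet_V 0), Real.volume_real_Ico_of_le ha,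
    smul_eq_mul, sub_zero]
  ring

lemma avg_even (n : ℕ) : avgI (2 * (n : ℤ)) 0 exampleFn = 2 / 3 := by
  have : dyI (2 * (n : ℤ)) 0 = Ico 0 ((1 / 4 : ℝ) ^ n) := by
    simp only [dyI, quarter_zpow, Int.cast_zero, mul_zero, zero_add, mul_one]
  rw [avgI, this, avg_Ico _ (by positivity), V_inter_even, volume_V]
  field_simp

lemma avg_odd (n : ℕ) : avgI (2 * (n : ℤ) + 1) 0 exampleFn = 1 / 3 := by
  have : dyI (2 * (n : ℤ) + 1) 0 = Ico 0 ((1 / 4 : ℝ) ^ n / 2) := by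
    have h : -(2 * (n : ℤ) + 1) = -(2 * (n : ℤ)) - 1 := by ring
    simp only [dyI, h, half_quarter_zpow, Int.cast_zero, mul_zero, zero_add, mul_one]
  rw [avgI, this, avg_Ico _ (by positivity), V_inter_odd, volume_V, pow_succ]
  field_simp
  norm_num

lemma avg_diff_sq (k : ℕ) :
    (avgI ((k : ℤ) + 1) 0 exampleFn - avgI (k : ℤ) 0 exampleFn) ^ 2 = 1 / 9 := by
  obtain ⟨n, rfl | rfl⟩ := Nat.even_or_odd' k
  · push_cast
    rw [avg_even, avg_odd]
    norm_num
  · have h := avg_even (n + 1)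
    push_cast at h ⊢
    rw [show 2 * (n : ℤ) + 1 + 1 = 2 * ((n : ℤ) + 1) by ring, h, avg_odd]
    norm_num

lemma dySq1_lower (n : ℕ) {x : ℝ} (hx : x ∈ Ico 0 ((1 / 2 : ℝ) ^ n)) :
    ENNReal.ofReal (n / 9) ^ (1 / 2 : ℝ) ≤ dySq1 exampleFn x := by
  refine ENNReal.rpow_le_rpow ?_ (by norm_num)
  let e : ℕ ↪ ℤ × ℤ := ⟨fun k => ((k : ℤ) + 1, 0), fun a b h => by simpa using h⟩
  refine le_trans ?_ (ENNReal.sum_le_tsum ((Finset.range n).map e))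
  rw [Finset.sum_map]
  have hterm : ∀ k ∈ Finset.range n,
      ENNReal.ofReal ((dyI (e k).1 (e k).2).indicator
        (fun _ => (avgI (e k).1 (e k).2 exampleFn
          - avgI ((e k).1 - 1) (Int.fdiv (e k).2 2) exampleFn) ^ 2) x)
        = ENNReal.ofReal (1 / 9) := by
    intro k hk
    have hmem : x ∈ dyI ((k : ℤ) + 1) 0 := by
      have h2 : (2 : ℝ) ^ (-((k : ℤ) + 1)) = (1 / 2 : ℝ) ^ (k + 1) := by
        rw [zpow_neg, one_div, inv_pow]
        norm_cast
      simp only [dyI, h2, Int.cast_zero, mul_zero, zero_add, mul_one]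
      refine ⟨hx.1, hx.2.trans_le ?_⟩
      exact pow_le_pow_of_le_one (by norm_num) (by norm_num) (Finset.mem_range.1 hk)
    change ENNReal.ofReal ((dyI ((k : ℤ) + 1) 0).indicator
        (fun _ => (avgI ((k : ℤ) + 1) 0 exampleFn
          - avgI ((k : ℤ) + 1 - 1) (Int.fdiv 0 2) exampleFn) ^ 2) x) = _
    rw [indicator_of_mem hmem, add_sub_cancel_right, Int.zero_fdiv, avg_diff_sq]
  rw [Finset.sum_congr rfl hterm, Finset.sum_const, Finset.card_range, nsmul_eq_mul,
    ← ENNReal.ofReal_natCast, ← ENNReal.ofReal_mul (by positivity)]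
  exact ENNReal.ofReal_le_ofReal (by linarith)

lemma integral_exampleFn (p : ℝ) (hp : 1 ≤ p) : ∫ x : ℝ, |exampleFn x| ^ p = 2 / 3 := by
  have : (fun x => |exampleFn x| ^ p) = (V 0).indicator 1 := by
    funext x
    rw [exampleFn_eq]
    by_cases hx : x ∈ V 0
    · simp [hx]
    · simp [hx, Real.zero_rpow (by linarith : p ≠ 0)]
  rw [this, integral_indicator_one (measurableSet_V 0), volume_V]
  norm_num

lemma lintegral_dySq1_lower (p : ℝ) (hp : 1 < p) (n : ℕ) :
    ENNReal.ofReal (((1 / 2 : ℝ) ^ n) ^ (1 / p) * (n / 9 : ℝ) ^ (1 / 2 : ℝ)) ≤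
      (∫⁻ x : ℝ, dySq1 exampleFn x ^ p) ^ (1 / p) := by
  have hp0 : 0 < p := by linarith
  have h : (ENNReal.ofReal (n / 9) ^ (1 / 2 : ℝ)) ^ p * ENNReal.ofReal ((1 / 2 : ℝ) ^ n) ≤
      ∫⁻ x : ℝ, dySq1 exampleFn x ^ p := by
    calc _ = ∫⁻ _ in Ico 0 ((1 / 2 : ℝ) ^ n), (ENNReal.ofReal (n / 9) ^ (1 / 2 : ℝ)) ^ p := by
          rw [setLIntegral_const, Real.volume_Ico, sub_zero]
      _ ≤ ∫⁻ x in Ico 0 ((1 / 2 : ℝ) ^ n), dySq1 exampleFn x ^ p :=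
          setLIntegral_mono' measurableSet_Ico fun x hx =>
            ENNReal.rpow_le_rpow (dySq1_lower n hx) hp0.le
      _ ≤ _ := setLIntegral_le_lintegral _ _
  refine le_trans (le_of_eq ?_) (ENNReal.rpow_le_rpow h (by positivity))
  rw [ENNReal.mul_rpow_of_nonneg _ _ (by positivity), ← ENNReal.rpow_mul,
    mul_one_div_cancel hp0.ne', ENNReal.rpow_one,
    ENNReal.ofReal_rpow_of_nonneg (by positivity) (by positivity),
    ENNReal.ofReal_rpow_of_nonneg (by positivity) (by positivity),
    ← ENNReal.ofReal_mul (by positivity), mul_comm]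

/-- For `f = Σ_j χ_{(2^{-2j-1}, 2^{-2j})}` one has `‖f‖_p = (2/3)^{1/p} ≤ 1` for all
`1 ≤ p < ∞`, and `‖S_d f‖_p ≥ c p^{1/2} ‖f‖_p` for all `1 < p < ∞` with an absolute
constant `c > 0`. -/
theorem dyadic_square_lower_bound_example :
    (∀ p : ℝ, 1 ≤ p →
      (∫ x : ℝ, |exampleFn x| ^ p) ^ (1 / p) = ((2 : ℝ) / 3) ^ (1 / p) ∧
      ((2 : ℝ) / 3) ^ (1 / p) ≤ 1) ∧
    ∃ c : ℝ, 0 < c ∧ ∀ p : ℝ, 1 < p →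
      ENNReal.ofReal (c * p ^ (1 / 2 : ℝ) * (∫ x : ℝ, |exampleFn x| ^ p) ^ (1 / p)) ≤
        (∫⁻ x : ℝ, dySq1 exampleFn x ^ p) ^ (1 / p) := by
  have hle : ∀ p : ℝ, 1 ≤ p → ((2 : ℝ) / 3) ^ (1 / p) ≤ 1 := fun p hp =>
    Real.rpow_le_one (by norm_num) (by norm_num) (by positivity)
  refine ⟨fun p hp => ⟨by rw [integral_exampleFn p hp], hle p hp⟩, 1 / 12, by norm_num, ?_⟩
  intro p hp
  have hp0 : 0 < p := by linarith
  rw [integral_exampleFn p hp.le]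
  refine le_trans (ENNReal.ofReal_le_ofReal ?_) (lintegral_dySq1_lower p hp ⌈p⌉₊)
  have hn1 : p ≤ ⌈p⌉₊ := Nat.le_ceil p
  have hn2 : (⌈p⌉₊ : ℝ) ≤ 2 * p := by linarith [Nat.ceil_lt_add_one hp0.le]
  generalize ⌈p⌉₊ = n at hn1 hn2
  have h1 : (1 / 4 : ℝ) ≤ ((1 / 2 : ℝ) ^ n) ^ (1 / p) := by
    rw [← Real.rpow_natCast, ← Real.rpow_mul (by norm_num)]
    have h4 : (1 / 4 : ℝ) = (1 / 2 : ℝ) ^ (2 : ℝ) := by norm_num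
    rw [h4]
    refine Real.rpow_le_rpow_of_exponent_ge (by norm_num) (by norm_num) ?_
    rw [mul_one_div, div_le_iff₀ hp0]
    exact hn2
  have h2 : 1 / 3 * p ^ (1 / 2 : ℝ) ≤ (n / 9 : ℝ) ^ (1 / 2 : ℝ) := by
    rw [← Real.sqrt_eq_rpow, ← Real.sqrt_eq_rpow]
    refine Real.le_sqrt_of_sq_le ?_
    rw [mul_pow, Real.sq_sqrt hp0.le]
    linarith
  have h0 : 0 ≤ p ^ (1 / 2 : ℝ) := by positivity
  calc 1 / 12 * p ^ (1 / 2 : ℝ) * (2 / 3 : ℝ) ^ (1 / p)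
      ≤ 1 / 12 * p ^ (1 / 2 : ℝ) * 1 :=
        mul_le_mul_of_nonneg_left (hle p hp.le) (by positivity)
    _ = 1 / 4 * (1 / 3 * p ^ (1 / 2 : ℝ)) := by ring
    _ ≤ _ := mul_le_mul h1 h2 (by positivity) (by positivity)
end

section
/- Fix 0<λ<1. There exists a constant C depending only on n such that for every f ∈ L¹(ℝ^n) and every dyadic cube Q₀, ω_λ((S_d f)², Q₀) ≤ (C/λ²)·(⨍_{Q₀} |f(x)| dx)², where S_d is the dyadic square function. -/
/-!
On `Q₀`, the square `(S_d f)²` is a constant `c` (the terms of the cubes containing `Q₀`) plus the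
tail `h` coming from the cubes strictly inside `Q₀`. Truncated subtraction gives
`(c + h - c) ⊔ (c - (c + h)) ≤ h`, even when `c = ∞`, so it is enough to show that
`|{x ∈ Q₀ : h x > α}| ≤ (λ/2) |Q₀|` for `α = 16 · 2^n A² / λ²`, where `A = ⨍_{Q₀} |f|`.

This is a weak type `(1,1)` bound, obtained by induction on the number of generations
(`weak_type_step`). With `u`, `v` the averages of `|f|`, `f` over `Q` and `σ ≥ 0` an amount already
accumulated, the measure of the part of `Q` where `σ + h_N > α` is at most
`(u/t + (σ + 2^n t u - v²)/α) |Q|`, provided `u ≤ 2^n t`. If `u > t` the bracket is at least `1`;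
if `u ≤ t` every child satisfies `u' ≤ 2^n t`, and the bracket is exactly the average of the
brackets of the children, with `σ` replaced by `σ + (v' - v)²`. Taking `t = 4A/λ` (or `4B/λ` with `B`
decreasing to `A`, as `A` may vanish) gives the claim for finitely many
generations, and continuity from below of the measure gives it for `h`.
-/

open MeasureTheory Set Filter
open scoped ENNReal Topology

/-- The dyadic cube `2^{-k}([0,1)^n + m)`. -/
def dyC (n : ℕ) (k : ℤ) (m : Fin n → ℤ) : Set (Fin n → ℝ) :=
  Set.univ.pi fun i => Set.Ico ((2 : ℝ) ^ (-k) * m i) ((2 : ℝ) ^ (-k) * (m i + 1))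

/-- The average of `f` over the dyadic cube `dyC n k m`. -/
noncomputable def dyAvg (n : ℕ) (k : ℤ) (m : Fin n → ℤ) (f : (Fin n → ℝ) → ℝ) : ℝ :=
  ⨍ x in dyC n k m, f x

/-- The square of the dyadic square function,
`(S_d f)²(x) = Σ_{Q ∈ Δ} (f_Q - f_{Q̂})² χ_Q(x)` (as an extended nonnegative real). -/
noncomputable def dySqSq (n : ℕ) (f : (Fin n → ℝ) → ℝ) (x : Fin n → ℝ) : ℝ≥0∞ :=
  ∑' km : ℤ × (Fin n → ℤ),
    ENNReal.ofReal ((dyC n km.1 km.2).indicator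
      (fun _ => (dyAvg n km.1 km.2 f -
        dyAvg n (km.1 - 1) (fun i => Int.fdiv (km.2 i) 2) f) ^ 2) x)

/-- The non-increasing rearrangement of an `ℝ≥0∞`-valued function:
`g*(t) = inf{α > 0 : |{g > α}| < t}`. -/
noncomputable def rearrE (n : ℕ) (g : (Fin n → ℝ) → ℝ≥0∞) (t : ℝ≥0∞) : ℝ≥0∞ :=
  sInf {l : ℝ≥0∞ | ∃ α : ℝ, 0 < α ∧ l = ENNReal.ofReal α ∧
    volume {x : Fin n → ℝ | ENNReal.ofReal α < g x} < t}

/-- The local mean oscillation `ω_λ(g, Q) = inf_c ((g - c)χ_Q)*(λ|Q|)` of a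
nonnegative (`ℝ≥0∞`-valued) function, with `|g - c|` interpreted via truncated
subtraction in both directions. -/
noncomputable def localOscE (n : ℕ) (lam : ℝ) (g : (Fin n → ℝ) → ℝ≥0∞)
    (Q : Set (Fin n → ℝ)) : ℝ≥0∞ :=
  ⨅ c : ℝ≥0∞,
    rearrE n (Q.indicator fun y => (g y - c) ⊔ (c - g y)) (ENNReal.ofReal lam * volume Q)

/-! ### Dyadic cubes -/

/-- The index of the dyadic cube of level `k` containing `x`. -/
noncomputable def dyIdx (n : ℕ) (k : ℤ) (x : Fin n → ℝ) : Fin n → ℤ :=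
  fun i => ⌊(2 : ℝ) ^ k * x i⌋

lemma mem_dyC_iff {n : ℕ} {k : ℤ} {m : Fin n → ℤ} {x : Fin n → ℝ} :
    x ∈ dyC n k m ↔ dyIdx n k x = m := by
  have h2 : (0 : ℝ) < 2 ^ k := by positivity
  simp only [dyC, mem_univ_pi, mem_Ico, dyIdx, funext_iff, Int.floor_eq_iff, zpow_neg]
  refine forall_congr' fun i => ?_
  rw [inv_mul_le_iff₀ h2, lt_inv_mul_iff₀ h2]

lemma dyIdx_parent (n : ℕ) (k : ℤ) (x : Fin n → ℝ) :
    (fun i => Int.fdiv (dyIdx n k x i) 2) = dyIdx n (k - 1) x := by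
  funext i
  simp only [dyIdx]
  rw [Int.fdiv_eq_ediv_of_nonneg _ (by norm_num), zpow_sub_one₀ (by norm_num)]
  have h := Int.floor_div_natCast ((2 : ℝ) ^ k * x i) 2
  rw [show ((2 : ℝ) ^ k * 2⁻¹ * x i) = (2 : ℝ) ^ k * x i / ((2 : ℕ) : ℝ) by push_cast; ring, h]
  rfl

lemma dyIdx_congr_of_le {n : ℕ} {k j : ℤ} {x y : Fin n → ℝ} (h : dyIdx n k x = dyIdx n k y)
    (hj : j ≤ k) : dyIdx n j x = dyIdx n j y := by
  induction j, hj using Int.leInductionDown with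
  | base => exact h
  | pred j _ ih => rw [← dyIdx_parent, ← dyIdx_parent, ih]

lemma measurableSet_dyC (n : ℕ) (k : ℤ) (m : Fin n → ℤ) : MeasurableSet (dyC n k m) :=
  MeasurableSet.univ_pi fun _ => measurableSet_Ico

lemma volume_dyC (n : ℕ) (k : ℤ) (m : Fin n → ℤ) :
    volume (dyC n k m) = ENNReal.ofReal (((2 : ℝ) ^ (-k)) ^ n) := by
  rw [dyC, volume_pi_pi]
  simp only [Real.volume_Ico]
  rw [ENNReal.ofReal_pow (by positivity)]
  simp [← mul_sub]

lemma volume_real_dyC (n : ℕ) (k : ℤ) (m : Fin n → ℤ) :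
    volume.real (dyC n k m) = ((2 : ℝ) ^ (-k)) ^ n := by
  rw [measureReal_def, volume_dyC, ENNReal.toReal_ofReal (by positivity)]

lemma volume_real_dyC_succ (n : ℕ) (k : ℤ) (m m' : Fin n → ℤ) :
    volume.real (dyC n k m) = 2 ^ n * volume.real (dyC n (k + 1) m') := by
  rw [volume_real_dyC, volume_real_dyC, ← mul_pow, neg_add, zpow_add₀ (by norm_num)]
  congr 1
  norm_num
  ring

/-- The index of the child, in direction `e`, of the dyadic cube of index `m`. -/
def dyChild {n : ℕ} (m : Fin n → ℤ) (e : Fin n → Fin 2) : Fin n → ℤ :=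
  fun i => 2 * m i + (e i : ℕ)

lemma dyChild_injective {n : ℕ} (m : Fin n → ℤ) : Function.Injective (dyChild m) := by
  intro e e' h
  funext i
  have := congrFun h i
  simp only [dyChild] at this
  ext
  omega

lemma dyChild_parent {n : ℕ} (m : Fin n → ℤ) (e : Fin n → Fin 2) :
    (fun i => Int.fdiv (dyChild m e i) 2) = m := by
  funext i
  have := (e i).isLt
  simp only [dyChild]
  rw [Int.fdiv_eq_ediv_of_nonneg _ (by norm_num)]
  omega

lemma dyC_eq_iUnion (n : ℕ) (k : ℤ) (m : Fin n → ℤ) :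
    dyC n k m = ⋃ e : Fin n → Fin 2, dyC n (k + 1) (dyChild m e) := by
  ext x
  have hp := dyIdx_parent n (k + 1) x
  rw [add_sub_cancel_right] at hp
  simp only [mem_iUnion, mem_dyC_iff]
  constructor
  · intro h
    rw [h] at hp
    refine ⟨fun i => ⟨(dyIdx n (k + 1) x i % 2).toNat, by omega⟩, ?_⟩
    funext i
    have := congrFun hp i
    simp only [dyChild]
    rw [Int.fdiv_eq_ediv_of_nonneg _ (by norm_num)] at this
    omega
  · rintro ⟨e, he⟩
    rw [← hp, he, dyChild_parent]

/-! ### Averages over dyadic cubes -/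

lemma dyAvg_eq (n : ℕ) (k : ℤ) (m : Fin n → ℤ) (f : (Fin n → ℝ) → ℝ) :
    dyAvg n k m f = (volume.real (dyC n k m))⁻¹ * ∫ x in dyC n k m, f x := by
  rw [dyAvg, setAverage_eq, smul_eq_mul]

lemma sum_dyAvg_child {n : ℕ} {f : (Fin n → ℝ) → ℝ} (hf : Integrable f) (k : ℤ)
    (m : Fin n → ℤ) :
    ∑ e : Fin n → Fin 2, dyAvg n (k + 1) (dyChild m e) f = 2 ^ n * dyAvg n k m f := by
  have hint : ∫ x in dyC n k m, f x
      = ∑ e : Fin n → Fin 2, ∫ x in dyC n (k + 1) (dyChild m e), f x := by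
    rw [dyC_eq_iUnion]
    refine integral_iUnion_fintype (fun e => measurableSet_dyC _ _ _) ?_
      (fun e => hf.integrableOn)
    intro e e' hne
    refine Set.disjoint_left.2 fun x hx hx' => hne (dyChild_injective m ?_)
    rw [← mem_dyC_iff.1 hx, ← mem_dyC_iff.1 hx']
  have hV : volume.real (dyC n (k + 1) m) ≠ 0 := by
    rw [volume_real_dyC]; positivity
  simp only [dyAvg_eq]
  rw [hint, volume_real_dyC_succ n k m m]
  simp only [volume_real_dyC] at hV ⊢
  rw [← Finset.mul_sum]
  field_simp

lemma dyAvg_abs_nonneg (n : ℕ) (k : ℤ) (m : Fin n → ℤ) (f : (Fin n → ℝ) → ℝ) :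
    0 ≤ dyAvg n k m (fun x => |f x|) := by
  rw [dyAvg_eq]
  exact mul_nonneg (by positivity) (integral_nonneg fun x => abs_nonneg _)

lemma abs_dyAvg_le (n : ℕ) (k : ℤ) (m : Fin n → ℤ) (f : (Fin n → ℝ) → ℝ) :
    |dyAvg n k m f| ≤ dyAvg n k m (fun x => |f x|) := by
  rw [dyAvg_eq, dyAvg_eq, abs_mul, abs_of_nonneg (by positivity : 0 ≤ (volume.real (dyC n k m))⁻¹)]
  gcongr
  exact abs_integral_le_integral_abs

/-! ### The weak type estimate -/

/-- The dyadic martingale difference `f_Q - f_{Q̂}` at `x`, where `Q` is the cube of level `j`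
containing `x`. -/
noncomputable def dyDiff (n : ℕ) (f : (Fin n → ℝ) → ℝ) (j : ℤ) (x : Fin n → ℝ) : ℝ :=
  dyAvg n j (dyIdx n j x) f - dyAvg n (j - 1) (dyIdx n (j - 1) x) f

/-- The weak type bound for `N` generations below the cube `dyC n k m`, with a quantity `s`
already accumulated. The factor of `|Q|` on the right is a potential: it is at least `1` when the
average of `|f|` over `Q` exceeds `t`, and otherwise it equals the mean of its values at the
children of `Q`. -/
lemma weak_type_step {n : ℕ} {f : (Fin n → ℝ) → ℝ} (hf : Integrable f) {t a : ℝ} (ht : 0 < t)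
    (ha : 0 < a) (N : ℕ) : ∀ (k : ℤ) (m : Fin n → ℤ) (s : ℝ), 0 ≤ s →
      dyAvg n k m (fun x => |f x|) ≤ 2 ^ n * t →
      volume.real {x | x ∈ dyC n k m ∧ a < s + ∑ j ∈ Finset.range N, dyDiff n f (k + 1 + j) x ^ 2}
        ≤ (dyAvg n k m (fun x => |f x|) / t
            + (s + 2 ^ n * t * dyAvg n k m (fun x => |f x|) - dyAvg n k m f ^ 2) / a)
          * volume.real (dyC n k m) := by
  have hfin : ∀ k m, volume (dyC n k m) ≠ ∞ := fun k m => by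
    rw [volume_dyC]; exact ENNReal.ofReal_ne_top
  -- `v² ≤ u² ≤ 2^n t u`, so the second part of the potential is at least `s / a`.
  have hpot : ∀ (k : ℤ) (m : Fin n → ℤ), dyAvg n k m (fun x => |f x|) ≤ 2 ^ n * t →
      0 ≤ 2 ^ n * t * dyAvg n k m (fun x => |f x|) - dyAvg n k m f ^ 2 := by
    intro k m hu
    have h1 := dyAvg_abs_nonneg n k m f
    have h2 := sq_le_sq' (abs_le.1 (abs_dyAvg_le n k m f)).1 (abs_le.1 (abs_dyAvg_le n k m f)).2
    nlinarith
  have hsub : ∀ (k : ℤ) (m : Fin n → ℤ) (P : (Fin n → ℝ) → Prop),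
      volume.real {x | x ∈ dyC n k m ∧ P x} ≤ volume.real (dyC n k m) :=
    fun k m P => measureReal_mono (fun x hx => hx.1) (hfin k m)
  induction N with
  | zero =>
    intro k m s hs hu
    have hu0 := dyAvg_abs_nonneg n k m f
    have hp := hpot k m hu
    by_cases hsa : a < s
    · refine (hsub k m _).trans (le_mul_of_one_le_left measureReal_nonneg ?_)
      have h1 : 0 ≤ dyAvg n k m (fun x => |f x|) / t := by positivity
      have h2 : 1 ≤ (s + 2 ^ n * t * dyAvg n k m (fun x => |f x|) - dyAvg n k m f ^ 2) / a := by
        rw [le_div_iff₀ ha]; linarith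
      linarith
    · have : {x | x ∈ dyC n k m ∧
          a < s + ∑ j ∈ Finset.range 0, dyDiff n f (k + 1 + (j : ℕ)) x ^ 2} = ∅ := by
        ext x; simp [not_lt.1 hsa]
      rw [this, measureReal_empty]
      refine mul_nonneg (add_nonneg (by positivity) (div_nonneg ?_ ha.le)) measureReal_nonneg
      linarith
  | succ N ih =>
    intro k m s hs hu
    have hu0 := dyAvg_abs_nonneg n k m f
    have hp := hpot k m hu
    have hsum_u := sum_dyAvg_child hf.abs k m
    have hsum_v := sum_dyAvg_child hf k m
    by_cases hut : t < dyAvg n k m (fun x => |f x|)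
    · refine (hsub k m _).trans (le_mul_of_one_le_left measureReal_nonneg ?_)
      have h1 : 1 ≤ dyAvg n k m (fun x => |f x|) / t := by
        rw [le_div_iff₀ ht]; linarith
      have h2 : 0 ≤ (s + 2 ^ n * t * dyAvg n k m (fun x => |f x|) - dyAvg n k m f ^ 2) / a :=
        div_nonneg (by linarith) ha.le
      linarith
    · have hue : ∀ e, dyAvg n (k + 1) (dyChild m e) (fun x => |f x|) ≤ 2 ^ n * t := by
        intro e
        have h1 := Finset.single_le_sum
          (f := fun e => dyAvg n (k + 1) (dyChild m e) (fun x => |f x|))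
          (fun e _ => dyAvg_abs_nonneg n (k + 1) (dyChild m e) f) (Finset.mem_univ e)
        refine h1.trans ?_
        rw [hsum_u]
        have := not_lt.1 hut
        gcongr
      have hcover : {x | x ∈ dyC n k m ∧
            a < s + ∑ j ∈ Finset.range (N + 1), dyDiff n f (k + 1 + (j : ℕ)) x ^ 2} ⊆
          ⋃ e : Fin n → Fin 2, {x | x ∈ dyC n (k + 1) (dyChild m e) ∧
            a < s + (dyAvg n (k + 1) (dyChild m e) f - dyAvg n k m f) ^ 2
              + ∑ j ∈ Finset.range N, dyDiff n f (k + 1 + 1 + (j : ℕ)) x ^ 2} := by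
        rintro x ⟨hx, hlt⟩
        have hx' := hx
        rw [dyC_eq_iUnion, mem_iUnion] at hx'
        obtain ⟨e, he⟩ := hx'
        refine mem_iUnion.2 ⟨e, he, ?_⟩
        have h0 : dyDiff n f (k + 1) x = dyAvg n (k + 1) (dyChild m e) f - dyAvg n k m f := by
          rw [dyDiff, add_sub_cancel_right, mem_dyC_iff.1 he, mem_dyC_iff.1 hx]
        rw [Finset.sum_range_succ'] at hlt
        simp only [Nat.cast_zero, add_zero, h0] at hlt
        refine hlt.trans_eq ?_
        rw [add_comm (∑ j ∈ Finset.range N, _), ← add_assoc]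
        congr 1
        refine Finset.sum_congr rfl fun j _ => ?_
        congr 2
        push_cast
        ring
      refine (measureReal_mono hcover ?_).trans ?_
      · refine ((measure_mono (iUnion_mono fun e x hx => hx.1)).trans_lt
          ((dyC_eq_iUnion n k m).symm ▸ (hfin k m).lt_top)).ne
      refine (measureReal_iUnion_fintype_le _).trans ?_
      refine (Finset.sum_le_sum fun e _ => ih (k + 1) (dyChild m e) _ (by positivity)
        (hue e)).trans_eq ?_
      simp only [volume_real_dyC_succ n k m m, volume_real_dyC]
      rw [← Finset.sum_mul]
      set w : ℝ := ((2 : ℝ) ^ (-(k + 1))) ^ n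
      set v := dyAvg n k m f
      set u := dyAvg n k m (fun x => |f x|)
      have hlin : ∀ e : Fin n → Fin 2,
          dyAvg n (k + 1) (dyChild m e) (fun x => |f x|) / t
            + (s + (dyAvg n (k + 1) (dyChild m e) f - v) ^ 2
              + 2 ^ n * t * dyAvg n (k + 1) (dyChild m e) (fun x => |f x|)
              - dyAvg n (k + 1) (dyChild m e) f ^ 2) / a
          = (1 / t + 2 ^ n * t / a) * dyAvg n (k + 1) (dyChild m e) (fun x => |f x|)
            + (-(2 * v / a)) * dyAvg n (k + 1) (dyChild m e) f + (s + v ^ 2) / a := by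
        intro e; field_simp; ring
      rw [Finset.sum_congr rfl fun e _ => hlin e, Finset.sum_add_distrib, Finset.sum_add_distrib,
        ← Finset.mul_sum, ← Finset.mul_sum, hsum_u, hsum_v]
      simp only [Finset.sum_const, Finset.card_univ, Fintype.card_pi, Fintype.card_fin,
        Finset.prod_const, nsmul_eq_mul]
      push_cast
      field_simp
      ring

/-! ### The tail of the square function -/

/-- The part of `(S_d f)²` coming from levels finer than `k`. -/
noncomputable def dyTail (n : ℕ) (f : (Fin n → ℝ) → ℝ) (k : ℤ) (x : Fin n → ℝ) : ℝ≥0∞ :=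
  ∑' j : ℕ, ENNReal.ofReal (dyDiff n f (k + 1 + j) x ^ 2)

lemma dySqSq_eq (n : ℕ) (f : (Fin n → ℝ) → ℝ) (x : Fin n → ℝ) :
    dySqSq n f x = ∑' j : ℤ, ENNReal.ofReal (dyDiff n f j x ^ 2) := by
  rw [dySqSq, ENNReal.tsum_prod']
  refine tsum_congr fun j => ?_
  rw [tsum_eq_single (dyIdx n j x)]
  · rw [indicator_of_mem (mem_dyC_iff.2 rfl), dyIdx_parent, dyDiff]
  · intro m hm
    rw [indicator_of_notMem (fun h => hm (mem_dyC_iff.1 h).symm), ENNReal.ofReal_zero]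

lemma dySqSq_eq_add_tail (n : ℕ) (f : (Fin n → ℝ) → ℝ) (k : ℤ) (x : Fin n → ℝ) :
    dySqSq n f x =
      (∑' j : ℕ, ENNReal.ofReal (dyDiff n f (k - j) x ^ 2)) + dyTail n f k x := by
  rw [dySqSq_eq, dyTail, ← (Equiv.addLeft (k + 1)).tsum_eq]
  rw [tsum_of_nat_of_neg_add_one ENNReal.summable ENNReal.summable, add_comm]
  congr 1
  refine tsum_congr fun j => ?_
  congr 3
  simp only [Equiv.coe_addLeft]
  ring

lemma volume_tail_le {n : ℕ} {f : (Fin n → ℝ) → ℝ} (hf : Integrable f) {t a : ℝ} (ht : 0 < t)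
    (ha : 0 < a) (k : ℤ) (m : Fin n → ℤ)
    (hu : dyAvg n k m (fun x => |f x|) ≤ 2 ^ n * t) :
    volume {x | x ∈ dyC n k m ∧ ENNReal.ofReal a < dyTail n f k x} ≤
      ENNReal.ofReal ((dyAvg n k m (fun x => |f x|) / t
        + 2 ^ n * t * dyAvg n k m (fun x => |f x|) / a) * volume.real (dyC n k m)) := by
  have hset : {x | x ∈ dyC n k m ∧ ENNReal.ofReal a < dyTail n f k x} =
      ⋃ N : ℕ, {x | x ∈ dyC n k m ∧
        a < 0 + ∑ j ∈ Finset.range N, dyDiff n f (k + 1 + j) x ^ 2} := by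
    ext x
    simp only [mem_ofPred_eq, mem_iUnion, exists_and_left, dyTail, ENNReal.tsum_eq_iSup_nat,
      lt_iSup_iff, zero_add]
    refine and_congr_right fun _ => exists_congr fun N => ?_
    rw [← ENNReal.ofReal_sum_of_nonneg fun j _ => sq_nonneg _,
      ENNReal.ofReal_lt_ofReal_iff_of_nonneg ha.le]
  have hmono : Monotone fun N : ℕ => {x | x ∈ dyC n k m ∧
        a < 0 + ∑ j ∈ Finset.range N, dyDiff n f (k + 1 + j) x ^ 2} := by
    intro N N' h x hx
    refine ⟨hx.1, hx.2.trans_le ?_⟩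
    gcongr
  rw [hset, hmono.measure_iUnion]
  refine iSup_le fun N => ?_
  have hne : volume {x | x ∈ dyC n k m ∧
      a < 0 + ∑ j ∈ Finset.range N, dyDiff n f (k + 1 + j) x ^ 2} ≠ ∞ := by
    refine ((measure_mono fun x hx => hx.1).trans_lt (?_ : volume (dyC n k m) < ∞)).ne
    rw [volume_dyC]
    exact ENNReal.ofReal_lt_top
  rw [← ofReal_measureReal hne]
  refine ENNReal.ofReal_le_ofReal ((weak_type_step hf ht ha N k m 0 le_rfl hu).trans ?_)
  gcongr
  nlinarith [sq_nonneg (dyAvg n k m f)]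

/-- Local mean oscillation bound for the square of the dyadic square function:
`ω_λ((S_d f)², Q₀) ≤ (C/λ²) (⨍_{Q₀} |f|)²` for `f ∈ L¹(ℝ^n)` and dyadic `Q₀`. -/
theorem dyadic_square_local_osc (n : ℕ) :
    ∃ C : ℝ, 0 < C ∧
      ∀ lam : ℝ, 0 < lam → lam < 1 →
        ∀ f : (Fin n → ℝ) → ℝ, Integrable f →
          ∀ (k : ℤ) (m : Fin n → ℤ),
            localOscE n lam (dySqSq n f) (dyC n k m) ≤
              ENNReal.ofReal (C / lam ^ 2 * (⨍ x in dyC n k m, |f x|) ^ 2) := by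
  refine ⟨16 * 2 ^ n, by positivity, ?_⟩
  intro lam hl hl1 f hf k m
  change _ ≤ ENNReal.ofReal (_ * dyAvg n k m (fun x => |f x|) ^ 2)
  have hA := dyAvg_abs_nonneg n k m f
  set A := dyAvg n k m (fun x => |f x|) with hAdef
  have hVpos : 0 < volume.real (dyC n k m) := by rw [volume_real_dyC]; positivity
  have hVol : volume (dyC n k m) = ENNReal.ofReal (volume.real (dyC n k m)) := by
    rw [volume_real_dyC, volume_dyC]
  obtain ⟨x₀, hx₀⟩ : (dyC n k m).Nonempty := by
    rw [nonempty_iff_ne_empty]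
    intro h
    rw [h, measureReal_empty] at hVpos
    exact lt_irrefl _ hVpos
  refine (iInf_le _ (∑' j : ℕ, ENNReal.ofReal (dyDiff n f (k - j) x₀ ^ 2))).trans ?_
  set c := ∑' j : ℕ, ENNReal.ofReal (dyDiff n f (k - j) x₀ ^ 2) with hc
  have htail : ∀ x ∈ dyC n k m,
      (dySqSq n f x - c) ⊔ (c - dySqSq n f x) ≤ dyTail n f k x := by
    intro x hx
    have hidx : dyIdx n k x = dyIdx n k x₀ := by
      rw [mem_dyC_iff.1 hx, mem_dyC_iff.1 hx₀]
    have heq : dySqSq n f x = c + dyTail n f k x := by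
      rw [dySqSq_eq_add_tail n f k x, hc]
      congr 1
      refine tsum_congr fun j => ?_
      rw [dyDiff, dyDiff, dyIdx_congr_of_le hidx (by omega : k - (j : ℤ) ≤ k),
        dyIdx_congr_of_le hidx (by omega : k - (j : ℤ) - 1 ≤ k)]
    rw [heq]
    refine sup_le (tsub_le_iff_left.2 le_rfl) ?_
    rw [tsub_eq_zero_of_le le_self_add]
    exact zero_le
  -- Proving the bound for every `B > A` and letting `B` decrease to `A` covers the case `A = 0`,
  -- where `4 A / lam` is not an admissible stopping threshold.
  have hB : ∀ B, A < B → rearrE n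
      ((dyC n k m).indicator fun y => (dySqSq n f y - c) ⊔ (c - dySqSq n f y))
      (ENNReal.ofReal lam * volume (dyC n k m)) ≤
        ENNReal.ofReal (16 * 2 ^ n / lam ^ 2 * B ^ 2) := by
    intro B hAB
    have hBpos : 0 < B := hA.trans_lt hAB
    have ha : 0 < 16 * 2 ^ n / lam ^ 2 * B ^ 2 := by positivity
    refine sInf_le ⟨_, ha, rfl, ?_⟩
    have ht : 0 < 4 * B / lam := by positivity
    have hpow : (1 : ℝ) ≤ 2 ^ n := one_le_pow₀ (by norm_num)
    have hBt : B ≤ 4 * B / lam := by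
      rw [le_div_iff₀ hl]; nlinarith
    have hu : A ≤ 2 ^ n * (4 * B / lam) := by nlinarith
    have hsub : {x : Fin n → ℝ | ENNReal.ofReal (16 * 2 ^ n / lam ^ 2 * B ^ 2) <
        (dyC n k m).indicator (fun y => (dySqSq n f y - c) ⊔ (c - dySqSq n f y)) x} ⊆
        {x | x ∈ dyC n k m ∧
          ENNReal.ofReal (16 * 2 ^ n / lam ^ 2 * B ^ 2) < dyTail n f k x} := by
      intro x hx
      rw [mem_ofPred_eq] at hx
      by_cases hxQ : x ∈ dyC n k m
      · rw [indicator_of_mem hxQ] at hx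
        exact ⟨hxQ, hx.trans_le (htail x hxQ)⟩
      · rw [indicator_of_notMem hxQ] at hx
        exact absurd hx not_lt_zero
    refine ((measure_mono hsub).trans (volume_tail_le hf ht ha k m hu)).trans_lt ?_
    rw [hVol, ← ENNReal.ofReal_mul hl.le]
    refine (ENNReal.ofReal_lt_ofReal_iff (by positivity)).2 ?_
    refine mul_lt_mul_of_pos_right ?_ hVpos
    rw [← hAdef]
    have hval : A / (4 * B / lam) + 2 ^ n * (4 * B / lam) * A / (16 * 2 ^ n / lam ^ 2 * B ^ 2)
        = lam / 2 * (A / B) := by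
      field_simp; ring
    rw [hval]
    have : A / B < 1 := (div_lt_one hBpos).2 hAB
    nlinarith
  have hcont : Tendsto (fun B : ℝ => ENNReal.ofReal (16 * 2 ^ n / lam ^ 2 * B ^ 2)) (𝓝[>] A)
      (𝓝 (ENNReal.ofReal (16 * 2 ^ n / lam ^ 2 * A ^ 2))) :=
    ((ENNReal.continuous_ofReal.comp (by fun_prop)).tendsto A).mono_left nhdsWithin_le_nhds
  exact ge_of_tendsto hcont (eventually_nhdsWithin_of_forall hB)
end

section
/- Fix 0<λ<1 and 1<q<∞. There exists a constant C depending only on n and q such that for every sequence f = {f_i} of measurable functions with ‖f(·)‖_{ℓ^q} ∈ L¹(ℝ^n) and every dyadic cube Q₀, ω_λ((M̄_q^d f)^q, Q₀) ≤ (C/λ^q)·(⨍_{Q₀} ‖f(x)‖_{ℓ^q} dx)^q, where M̄_q^d is the dyadic vector-valued maximal operator. -/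
/-!
On a dyadic cube `Q₀` each `M^d f_i` is the maximum of a constant `c_i`, contributed by the dyadic
cubes containing `Q₀`, and of the maximal function `a_i` over the dyadic subcubes of `Q₀`. With
`c = ∑ c_i ^ q` this gives `|(M̄_q^d f)^q - c| ≤ ∑ a_i ^ q` on `Q₀` (`DyVV.osc_pointwise`), so the
theorem follows from the Fefferman–Stein weak type `(1,1)` inequality for the localized operator
(`DyVV.vv_weak`), applied at heights `α` slightly above `K λ⁻¹ ⨍_{Q₀} ‖f‖_{ℓ^q}`.

The weak type inequality is proved for averages over an abstract doubling sequence of nested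
countable partitions (the fibres of `lab j`), first for finitely many levels `j ≤ N`. Stop at the
first level at which the average of `h = ‖f‖_{ℓ^q}` exceeds `α`, or at `N`, and replace each `f_i` by
its average `g_i` at the stopping level. Outside the set where some average of `h` exceeds `α`, which
has measure at most `α⁻¹ ∫ h` (`DyVV.weak_type`), the averages of `f_i` and `g_i` agree
(`DyVV.avg_savg`). By Minkowski's inequality `‖g‖_{ℓ^q}` is at most the stopped average of `h`, which
is at most `D α` by doubling and has integral `∫ h`; hence `∫ ‖g‖_{ℓ^q}^q ≤ (D α)^(q-1) ∫ h`, and the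
scalar `L^q` maximal inequality (`DyVV.strong_type`) together with Markov's inequality concludes.
Stopping at the finite level `N` makes Lebesgue differentiation unnecessary; the bounds are uniform
in `N`, and `N → ∞` by continuity of the measure.
-/

open MeasureTheory Set Filter
open scoped ENNReal Topology

/-- The dyadic maximal operator `M^d f(x) = sup_{Q ∈ Δ, Q ∋ x} ⨍_Q |f|`. -/
noncomputable def dyMax (n : ℕ) (f : (Fin n → ℝ) → ℝ) (x : Fin n → ℝ) : ℝ≥0∞ :=
  ⨆ (km : ℤ × (Fin n → ℤ)) (_ : x ∈ dyC n km.1 km.2),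
    ENNReal.ofReal (⨍ y in dyC n km.1 km.2, |f y|)

/-- The `q`-th power of the dyadic vector-valued maximal operator,
`(M̄_q^d f)^q (x) = Σ_i (M^d f_i(x))^q`. -/
noncomputable def dyVvMaxPow (n : ℕ) (q : ℝ) (f : ℕ → (Fin n → ℝ) → ℝ)
    (x : Fin n → ℝ) : ℝ≥0∞ :=
  ∑' i : ℕ, dyMax n (f i) x ^ q

/-- The `ℓ^q` norm `‖f(x)‖_{ℓ^q} = (Σ_i |f_i(x)|^q)^{1/q}`. -/
noncomputable def lqNorm (n : ℕ) (q : ℝ) (f : ℕ → (Fin n → ℝ) → ℝ)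
    (x : Fin n → ℝ) : ℝ≥0∞ :=
  (∑' i : ℕ, ENNReal.ofReal (|f i x|) ^ q) ^ (1 / q)

set_option linter.unusedSectionVars false

namespace DyVV

/-! ### Averages over nested partitions and stopping -/

section Abstract

variable {X ι : Type*} [MeasurableSpace X] [Countable ι] [MeasurableSpace ι]
  [MeasurableSingletonClass ι]

/-- The cell of the `j`-th partition (the fibres of `lab j`) containing `x`. -/
def fib (lab : ℕ → X → ι) (j : ℕ) (x : X) : Set X := lab j ⁻¹' {lab j x}

/-- The average of `h` over the cell of the `j`-th partition containing `x`; it is `0` on null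
cells. -/
noncomputable def avg (μ : Measure X) (lab : ℕ → X → ι) (j : ℕ) (h : X → ℝ≥0∞) (x : X) : ℝ≥0∞ :=
  (μ (fib lab j x))⁻¹ * ∫⁻ y in fib lab j x, h y ∂μ

/-- `A` is a union of cells of the `j`-th partition. -/
def Sat (lab : ℕ → X → ι) (j : ℕ) (A : Set X) : Prop :=
  ∀ x y, lab j x = lab j y → x ∈ A → y ∈ A

/-- The partitions get finer as the level grows. -/
def Refines (lab : ℕ → X → ι) : Prop :=
  ∀ j x y, lab (j + 1) x = lab (j + 1) y → lab j x = lab j y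

variable {μ : Measure X} {lab : ℕ → X → ι}

lemma Refines.le (hr : Refines lab) {i j : ℕ} (hij : i ≤ j) {x y : X}
    (h : lab j x = lab j y) : lab i x = lab i y := by
  induction hij with
  | refl => exact h
  | step _ ih => exact ih (hr _ _ _ h)

lemma avg_congr {j : ℕ} {x y : X} (h : lab j x = lab j y) (g : X → ℝ≥0∞) :
    avg μ lab j g x = avg μ lab j g y := by
  simp only [avg, fib, h]

lemma Sat.eq {j : ℕ} {A : Set X} (hA : Sat lab j A) : A = lab j ⁻¹' (Set.image (lab j) A) := by
  ext x
  constructor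
  · exact fun hx => ⟨x, hx, rfl⟩
  · rintro ⟨y, hy, hxy⟩
    exact hA y x hxy hy

lemma Sat.measurableSet {j : ℕ} {A : Set X} (hA : Sat lab j A) (hm : Measurable (lab j)) :
    MeasurableSet A := by
  rw [hA.eq]
  exact hm (Set.to_countable _).measurableSet

lemma measurable_avg {j : ℕ} (hm : Measurable (lab j)) (h : X → ℝ≥0∞) :
    Measurable (avg μ lab j h) := by
  have : avg μ lab j h = (fun i => (μ (lab j ⁻¹' {i}))⁻¹ * ∫⁻ y in lab j ⁻¹' {i}, h y ∂μ) ∘ lab j :=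
    rfl
  rw [this]
  exact (measurable_of_countable _).comp hm

lemma setLIntegral_avg_fib [IsFiniteMeasure μ] {j : ℕ} (hm : Measurable (lab j)) (h : X → ℝ≥0∞)
    (i : ι) : ∫⁻ x in lab j ⁻¹' {i}, avg μ lab j h x ∂μ = ∫⁻ x in lab j ⁻¹' {i}, h x ∂μ := by
  have hms : MeasurableSet (lab j ⁻¹' {i}) := hm (measurableSet_singleton i)
  have : ∫⁻ x in lab j ⁻¹' {i}, avg μ lab j h x ∂μ
      = ∫⁻ x in lab j ⁻¹' {i}, ((μ (lab j ⁻¹' {i}))⁻¹ * ∫⁻ y in lab j ⁻¹' {i}, h y ∂μ) ∂μ := by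
    refine setLIntegral_congr_fun hms fun x hx => ?_
    simp only [mem_preimage, mem_singleton_iff] at hx
    simp only [avg, fib, hx]
  rw [this, setLIntegral_const]
  by_cases h0 : μ (lab j ⁻¹' {i}) = 0
  · rw [setLIntegral_measure_zero _ _ h0, h0]; simp
  · rw [mul_comm, ← mul_assoc, ENNReal.mul_inv_cancel h0 (measure_ne_top _ _), one_mul]

lemma setLIntegral_avg [IsFiniteMeasure μ] {j : ℕ} (hm : Measurable (lab j)) (h : X → ℝ≥0∞)
    {A : Set X} (hA : Sat lab j A) :
    ∫⁻ x in A, avg μ lab j h x ∂μ = ∫⁻ x in A, h x ∂μ := by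
  have hU : A = ⋃ i : (Set.image (lab j) A), lab j ⁻¹' {i.1} := by
    conv_lhs => rw [hA.eq]
    ext x
    simp [eq_comm]
  have hd : Pairwise (Function.onFun Disjoint fun i : Set.image (lab j) A => lab j ⁻¹' {i.1}) := by
    intro a b hab
    refine Disjoint.preimage _ ?_
    simpa using fun h => hab (Subtype.ext h)
  rw [hU, lintegral_iUnion (fun i => hm (measurableSet_singleton _)) hd,
    lintegral_iUnion (fun i => hm (measurableSet_singleton _)) hd]
  exact tsum_congr fun i => setLIntegral_avg_fib hm h i.1

/-- First level `l ≤ N` at which the average of `h` exceeds `α`, and `N` if there is none. -/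
noncomputable def stopLevel (μ : Measure X) (lab : ℕ → X → ι) (h : X → ℝ≥0∞) (α : ℝ≥0∞) (N : ℕ)
    (x : X) : ℕ :=
  sInf {l | l = N ∨ α < avg μ lab l h x}

section Stopping
variable {h : X → ℝ≥0∞} {α : ℝ≥0∞} {N : ℕ}

lemma stopLevel_mem (x : X) : stopLevel μ lab h α N x = N ∨ α < avg μ lab (stopLevel μ lab h α N x) h x :=
  Nat.sInf_mem (s := {l | l = N ∨ α < avg μ lab l h x}) ⟨N, Or.inl rfl⟩

lemma stopLevel_le (x : X) : stopLevel μ lab h α N x ≤ N :=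
  Nat.sInf_le (s := {l | l = N ∨ α < avg μ lab l h x}) (Or.inl rfl)

lemma avg_le_of_lt_stopLevel {x : X} {l : ℕ} (hl : l < stopLevel μ lab h α N x) :
    avg μ lab l h x ≤ α := by
  have := Nat.notMem_of_lt_sInf hl
  simp only [mem_ofPred_eq, not_or, not_lt] at this
  exact this.2

lemma lt_stopLevel_iff {x : X} {l : ℕ} :
    l < stopLevel μ lab h α N x ↔ l < N ∧ ∀ i ≤ l, avg μ lab i h x ≤ α := by
  constructor
  · exact fun hl => ⟨hl.trans_le (stopLevel_le x), fun i hi => avg_le_of_lt_stopLevel (hi.trans_lt hl)⟩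
  · rintro ⟨h1, h2⟩
    by_contra hc
    rw [not_lt] at hc
    rcases stopLevel_mem (μ := μ) (lab := lab) (h := h) (α := α) (N := N) x with h3 | h3
    · omega
    · exact absurd (h2 _ hc) (not_le.2 h3)

lemma sat_lt_stopLevel (hr : Refines lab) (l : ℕ) : Sat lab l {x | l < stopLevel μ lab h α N x} := by
  intro x y hxy hx
  simp only [mem_ofPred_eq, lt_stopLevel_iff] at hx ⊢
  refine ⟨hx.1, fun i hi => ?_⟩
  rw [← avg_congr (hr.le hi hxy)]
  exact hx.2 i hi

lemma sat_stopLevel_eq (hr : Refines lab) (l : ℕ) : Sat lab l {x | stopLevel μ lab h α N x = l} := by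
  intro x y hxy hx
  simp only [mem_ofPred_eq] at hx ⊢
  have h1 : ¬ l < stopLevel μ lab h α N x := by omega
  have h2 : ¬ l < stopLevel μ lab h α N y := fun hc => h1 (sat_lt_stopLevel hr l y x hxy.symm hc)
  rcases Nat.eq_zero_or_pos l with h0 | h0
  · omega
  · have h3 : l - 1 < stopLevel μ lab h α N x := by omega
    have h4 : l - 1 < stopLevel μ lab h α N y :=
      sat_lt_stopLevel hr (l - 1) x y (hr.le (Nat.sub_le l 1) hxy) h3
    omega

/-- The average of `g` at the stopping level determined by `h`. -/
noncomputable def savg (μ : Measure X) (lab : ℕ → X → ι) (h : X → ℝ≥0∞) (α : ℝ≥0∞) (N : ℕ)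
    (g : X → ℝ≥0∞) (x : X) : ℝ≥0∞ :=
  avg μ lab (stopLevel μ lab h α N x) g x

lemma measurable_savg (hm : ∀ j, Measurable (lab j)) (hr : Refines lab) (g : X → ℝ≥0∞) :
    Measurable (savg μ lab h α N g) := by
  have hs : savg μ lab h α N g = fun x =>
      ∑' l, {x | stopLevel μ lab h α N x = l}.indicator (avg μ lab l g) x := by
    funext x
    rw [tsum_eq_single (stopLevel μ lab h α N x)]
    · simp [savg]
    · intro l hl
      simp [hl.symm]
  rw [hs]
  exact Measurable.tsum fun l =>
    (measurable_avg (hm l) g).indicator ((sat_stopLevel_eq hr l).measurableSet (hm l))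

/-- Optional stopping: on a union of cells of level `j` where the stopping level is at least `j`,
a function and its stopped average have the same integral. -/
lemma setLIntegral_savg [IsFiniteMeasure μ] (hm : ∀ j, Measurable (lab j)) (hr : Refines lab)
    (g : X → ℝ≥0∞) {j : ℕ} {A : Set X} (hA : Sat lab j A)
    (hj : ∀ x ∈ A, j ≤ stopLevel μ lab h α N x) :
    ∫⁻ x in A, savg μ lab h α N g x ∂μ = ∫⁻ x in A, g x ∂μ := by
  have hU : A = ⋃ l : ℕ, A ∩ {x | stopLevel μ lab h α N x = l} := by
    ext x; simp
  have hd : Pairwise (Function.onFun Disjoint fun l : ℕ => A ∩ {x | stopLevel μ lab h α N x = l}) := by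
    intro a b hab
    refine Set.disjoint_left.2 fun x hx hx' => hab ?_
    exact hx.2.symm.trans hx'.2
  have hms : ∀ l, MeasurableSet (A ∩ {x | stopLevel μ lab h α N x = l}) := fun l =>
    (hA.measurableSet (hm j)).inter ((sat_stopLevel_eq hr l).measurableSet (hm l))
  rw [hU, lintegral_iUnion hms hd, lintegral_iUnion hms hd]
  refine tsum_congr fun l => ?_
  by_cases hjl : j ≤ l
  · have hS : Sat lab l (A ∩ {x | stopLevel μ lab h α N x = l}) := fun x y hxy hx =>
      ⟨hA x y (hr.le hjl hxy) hx.1, sat_stopLevel_eq hr l x y hxy hx.2⟩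
    rw [← setLIntegral_avg (hm l) g hS]
    refine setLIntegral_congr_fun (hms l) fun x hx => ?_
    have : stopLevel μ lab h α N x = l := hx.2
    simp only [savg, this]
  · have : A ∩ {x | stopLevel μ lab h α N x = l} = ∅ := by
      ext x
      simp only [mem_inter_iff, mem_ofPred_eq, mem_empty_iff_false, iff_false, not_and]
      intro hx hl
      exact hjl (hl ▸ hj x hx)
    simp [this]

lemma lintegral_savg [IsFiniteMeasure μ] (hm : ∀ j, Measurable (lab j)) (hr : Refines lab)
    (g : X → ℝ≥0∞) :
    ∫⁻ x, savg μ lab h α N g x ∂μ = ∫⁻ x, g x ∂μ := by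
  have := setLIntegral_savg (μ := μ) (h := h) (α := α) (N := N) hm hr g (j := 0) (A := univ)
    (fun _ _ _ _ => mem_univ _) (fun _ _ => Nat.zero_le _)
  simpa using this

/-- The weak type `(1,1)` inequality for the maximal function over the first levels. -/
lemma weak_type [IsFiniteMeasure μ] (hm : ∀ j, Measurable (lab j)) (hr : Refines lab)
    (h : X → ℝ≥0∞) (α : ℝ≥0∞) (N : ℕ) :
    α * μ {x | ∃ l ≤ N, α < avg μ lab l h x} ≤ ∫⁻ x, h x ∂μ := by
  rw [← lintegral_savg (h := h) (α := α) (N := N) hm hr h]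
  refine le_trans ?_ (mul_meas_ge_le_lintegral (measurable_savg hm hr h) α)
  gcongr
  rename_i x
  rintro ⟨l, hl, hlx⟩
  rcases stopLevel_mem (μ := μ) (lab := lab) (h := h) (α := α) (N := N) x with h3 | h3
  · rcases hl.lt_or_eq with h4 | h4
    · exact absurd hlx (not_lt.2 (avg_le_of_lt_stopLevel (by rw [h3]; exact h4)))
    · simp only [savg, h3]; exact h4 ▸ hlx.le
  · exact h3.le

end Stopping
end Abstract

/-! ### Minkowski's inequality and the maximal theorem -/

/-- Minkowski's integral inequality `‖(∫ f_i)_i‖_{ℓ^q} ≤ ∫ ‖f‖_{ℓ^q}`. -/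
lemma minkowski {X : Type*} [MeasurableSpace X] (ν : Measure X) {q : ℝ} (hq : 1 < q)
    (f : ℕ → X → ℝ≥0∞) (hf : ∀ i, Measurable (f i)) :
    ∑' i, (∫⁻ x, f i x ∂ν) ^ q ≤ (∫⁻ x, (∑' i, f i x ^ q) ^ (1 / q) ∂ν) ^ q := by
  have hq0 : 0 < q := by linarith
  set H := ∫⁻ x, (∑' i, f i x ^ q) ^ (1 / q) ∂ν with hH
  by_cases hHt : H = ∞
  · rw [hHt, ENNReal.top_rpow_of_pos hq0]; exact le_top
  have hfh : ∀ i x, f i x ≤ (∑' i, f i x ^ q) ^ (1 / q) := fun i x => by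
    rw [one_div, ENNReal.le_rpow_inv_iff hq0]
    exact ENNReal.le_tsum (f := fun i => f i x ^ q) i
  have hA : ∀ i, ∫⁻ x, f i x ∂ν ≤ H := fun i => lintegral_mono (hfh i)
  rw [ENNReal.tsum_eq_iSup_sum]
  refine iSup_le fun s => ?_
  set S := ∑ i ∈ s, (∫⁻ x, f i x ∂ν) ^ q with hS
  have hSt : S ≠ ∞ := by
    rw [hS]
    refine ENNReal.sum_ne_top.2 fun i _ => ?_
    exact ENNReal.rpow_ne_top_of_nonneg hq0.le (ne_top_of_le_ne_top hHt (hA i))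
  by_cases hS0 : S = 0
  · rw [hS0]; exact zero_le
  have hpq : (q / (q - 1)).HolderConjugate q := (Real.HolderConjugate.conjExponent hq).symm
  have hq1 : q - 1 ≠ 0 := by linarith
  -- duality: pair the vector of integrals with its own `q - 1` powers
  have key : S ≤ S ^ (1 / (q / (q - 1))) * H := by
    calc S = ∑ i ∈ s, ∫⁻ x, (∫⁻ y, f i y ∂ν) ^ (q - 1) * f i x ∂ν := by
          refine Finset.sum_congr rfl fun i _ => ?_
          rw [lintegral_const_mul _ (hf i)]
          conv_lhs => rw [show q = (q - 1) + 1 by ring]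
          rw [ENNReal.rpow_add_of_nonneg _ _ (by linarith) zero_le_one, ENNReal.rpow_one]
      _ = ∫⁻ x, ∑ i ∈ s, (∫⁻ y, f i y ∂ν) ^ (q - 1) * f i x ∂ν :=
          (lintegral_finsetSum _ fun i _ => (hf i).const_mul _).symm
      _ ≤ ∫⁻ x, S ^ (1 / (q / (q - 1))) * (∑' i, f i x ^ q) ^ (1 / q) ∂ν := by
          refine lintegral_mono fun x => ?_
          refine (ENNReal.inner_le_Lp_mul_Lq s _ _ hpq).trans ?_
          have h1 : ∑ i ∈ s, ((∫⁻ y, f i y ∂ν) ^ (q - 1)) ^ (q / (q - 1)) = S := by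
            refine Finset.sum_congr rfl fun i _ => ?_
            rw [← ENNReal.rpow_mul]
            congr 1
            field_simp
          rw [h1]
          gcongr
          exact ENNReal.sum_le_tsum s
      _ = S ^ (1 / (q / (q - 1))) * H := by
          rw [lintegral_const_mul]
          exact (Measurable.tsum fun i => (hf i).pow_const q).pow_const _
  have h2 : S = S ^ (1 / (q / (q - 1))) * S ^ (1 / q) := by
    rw [← ENNReal.rpow_add _ _ hS0 hSt]
    have : 1 / (q / (q - 1)) + 1 / q = 1 := by field_simp; ring
    rw [this, ENNReal.rpow_one]
  rw [h2] at key
  have h3 : S ^ (1 / q) ≤ H := by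
    have hne : S ^ (1 / (q / (q - 1))) ≠ 0 := by
      simp [ENNReal.rpow_eq_zero_iff, hS0, hSt]
    have hnt : S ^ (1 / (q / (q - 1))) ≠ ∞ := by
      simp [ENNReal.rpow_eq_top_iff, hS0, hSt]
    rw [← h2] at key
    nth_rewrite 1 [h2] at key
    exact (ENNReal.mul_le_mul_iff_right hne hnt).1 key
  rw [one_div, ENNReal.rpow_inv_le_iff hq0] at h3
  exact h3

lemma lintegral_Ioo_rpow {p : ℝ} (hp : -1 < p) {b : ℝ} (hb : 0 ≤ b) :
    ∫⁻ t in Ioo 0 b, ENNReal.ofReal (t ^ p) = ENNReal.ofReal (b ^ (p + 1) / (p + 1)) := by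
  have hInt : IntegrableOn (fun t : ℝ => t ^ p) (Ioc 0 b) :=
    (intervalIntegrable_iff_integrableOn_Ioc_of_le hb).1 (intervalIntegral.intervalIntegrable_rpow' hp)
  rw [setLIntegral_congr Ioo_ae_eq_Ioc, ← ofReal_integral_eq_lintegral_ofReal hInt]
  · rw [← intervalIntegral.integral_of_le hb, integral_rpow (Or.inl hp),
      Real.zero_rpow (by linarith), sub_zero]
  · filter_upwards [ae_restrict_mem measurableSet_Ioc] with t ht
    exact Real.rpow_nonneg ht.1.le _

section Abstract

variable {X ι : Type*} [MeasurableSpace X] [Countable ι] [MeasurableSpace ι]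
  [MeasurableSingletonClass ι] {μ : Measure X} {lab : ℕ → X → ι}

lemma avg_le_const {j : ℕ} {g : X → ℝ≥0∞} {B : ℝ≥0∞} (hg : ∀ x, g x ≤ B) (x : X) :
    avg μ lab j g x ≤ B := by
  calc avg μ lab j g x ≤ (μ (fib lab j x))⁻¹ * ∫⁻ y in fib lab j x, B ∂μ := by
        unfold avg; gcongr; exact hg _
    _ = B * ((μ (fib lab j x))⁻¹ * μ (fib lab j x)) := by rw [setLIntegral_const]; ring
    _ ≤ B * 1 := by gcongr; exact ENNReal.inv_mul_le_one _
    _ = B := mul_one B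

/-- The average splits into the part of `g` above height `t` and a remainder at most `t`. -/
lemma avg_le_trunc {j : ℕ} {g : X → ℝ≥0∞} (hg : Measurable g) (t : ℝ≥0∞) (x : X) :
    avg μ lab j g x ≤ avg μ lab j ({y | t < g y}.indicator g) x + t := by
  have hms : MeasurableSet {y | t < g y} := measurableSet_lt measurable_const hg
  calc avg μ lab j g x
      ≤ (μ (fib lab j x))⁻¹ * ∫⁻ y in fib lab j x, ({y | t < g y}.indicator g y + t) ∂μ := by
        unfold avg
        gcongr with y
        by_cases hy : t < g y
        · simp [hy]
        · simp [hy, not_lt.1 hy]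
    _ = avg μ lab j ({y | t < g y}.indicator g) x + avg μ lab j (fun _ => t) x := by
        rw [lintegral_add_left (hg.indicator hms), mul_add]; rfl
    _ ≤ _ := by gcongr; exact avg_le_const (fun _ => le_rfl) x

/-- Doob's `L^q` inequality for the maximal function over the first levels, with a constant
independent of the number of levels and of the bound `B` on `g`. -/
lemma strong_type [IsFiniteMeasure μ] (hm : ∀ j, Measurable (lab j)) (hr : Refines lab)
    {q : ℝ} (hq : 1 < q) {g : X → ℝ≥0∞} (hg : Measurable g) {B : ℝ≥0∞} (hB : B ≠ ∞)
    (hgB : ∀ x, g x ≤ B) (N : ℕ) :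
    ∫⁻ x, (⨆ l : Fin (N + 1), avg μ lab l g x) ^ q ∂μ
      ≤ ENNReal.ofReal (q * 2 ^ q / (q - 1)) * ∫⁻ x, g x ^ q ∂μ := by
  have hq0 : 0 < q := by linarith
  set M : X → ℝ≥0∞ := fun x => ⨆ l : Fin (N + 1), avg μ lab l g x with hM
  have hMm : Measurable M := Measurable.iSup fun l => measurable_avg (hm l) g
  have hMB : ∀ x, M x ≤ B := fun x => iSup_le fun l => avg_le_const hgB x
  have hMt : ∀ x, M x ≠ ∞ := fun x => ne_top_of_le_ne_top hB (hMB x)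
  have hgt : ∀ x, g x ≠ ∞ := fun x => ne_top_of_le_ne_top hB (hgB x)
  have e1 : ∫⁻ x, M x ^ q ∂μ = ∫⁻ x, ENNReal.ofReal ((M x).toReal ^ q) ∂μ := by
    refine lintegral_congr fun x => ?_
    rw [← ENNReal.ofReal_rpow_of_nonneg ENNReal.toReal_nonneg hq0.le, ENNReal.ofReal_toReal (hMt x)]
  rw [e1, lintegral_rpow_eq_lintegral_meas_lt_mul μ
    (Eventually.of_forall fun x => ENNReal.toReal_nonneg) hMm.ennreal_toReal.aemeasurable hq0]
  -- weak type bound for the truncation of `g` at height `t / 2`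
  have e2 : ∀ t ∈ Ioi (0 : ℝ), μ {x | t < (M x).toReal} * ENNReal.ofReal (t ^ (q - 1)) ≤
      ∫⁻ x, ENNReal.ofReal (2 * t ^ (q - 2)) * (if ENNReal.ofReal (t / 2) < g x then g x else 0)
        ∂μ := by
    intro t ht
    have ht0 : (0 : ℝ) < t := ht
    have hms : MeasurableSet {y | ENNReal.ofReal (t / 2) < g y} :=
      measurableSet_lt measurable_const hg
    have hw := weak_type (μ := μ) hm hr ({y | ENNReal.ofReal (t / 2) < g y}.indicator g)
      (ENNReal.ofReal (t / 2)) N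
    have hsub : {x | t < (M x).toReal} ⊆ {x | ∃ l ≤ N, ENNReal.ofReal (t / 2) <
        avg μ lab l ({y | ENNReal.ofReal (t / 2) < g y}.indicator g) x} := by
      intro x hx
      have hx1 : ENNReal.ofReal t < M x := (ENNReal.ofReal_lt_iff_lt_toReal ht0.le (hMt x)).2 hx
      obtain ⟨l, hl⟩ := lt_iSup_iff.1 hx1
      refine ⟨l, Nat.lt_succ_iff.1 l.2, ?_⟩
      have h0 : ENNReal.ofReal t = ENNReal.ofReal (t / 2) + ENNReal.ofReal (t / 2) := by
        rw [← ENNReal.ofReal_add (by positivity) (by positivity), add_halves]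
      have h1 := hl.trans_le (avg_le_trunc hg (ENNReal.ofReal (t / 2)) x)
      rw [h0] at h1
      exact lt_of_add_lt_add_right h1
    have e3 : ENNReal.ofReal (t ^ (q - 1)) =
        ENNReal.ofReal (2 * t ^ (q - 2)) * ENNReal.ofReal (t / 2) := by
      rw [← ENNReal.ofReal_mul (by positivity)]
      congr 1
      rw [show q - 1 = (q - 2) + 1 by ring, Real.rpow_add_one ht0.ne']
      ring
    rw [lintegral_const_mul]
    · calc μ {x | t < (M x).toReal} * ENNReal.ofReal (t ^ (q - 1))
          = ENNReal.ofReal (2 * t ^ (q - 2)) *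
            (ENNReal.ofReal (t / 2) * μ {x | t < (M x).toReal}) := by rw [e3]; ring
        _ ≤ _ := by
          gcongr
          refine (mul_le_mul_right (measure_mono hsub) _).trans (hw.trans_eq ?_)
          refine lintegral_congr fun x => ?_
          simp [indicator_apply]
    · exact Measurable.ite hms hg measurable_const
  have e4 := setLIntegral_mono' (μ := volume) measurableSet_Ioi e2
  refine (mul_le_mul_right e4 _).trans ?_
  rw [lintegral_lintegral_swap]
  · -- the inner integral is an explicit power of `g x`
    have e5 : ∀ x, ∫⁻ t in Ioi (0 : ℝ), ENNReal.ofReal (2 * t ^ (q - 2)) *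
        (if ENNReal.ofReal (t / 2) < g x then g x else 0) =
        ENNReal.ofReal (2 ^ q / (q - 1)) * g x ^ q := by
      intro x
      set r := (g x).toReal with hr'
      have hgr : g x = ENNReal.ofReal r := (ENNReal.ofReal_toReal (hgt x)).symm
      have hr0 : 0 ≤ r := ENNReal.toReal_nonneg
      rw [hgr]
      have e6 : ∀ t ∈ Ioi (0 : ℝ), ENNReal.ofReal (2 * t ^ (q - 2)) *
          (if ENNReal.ofReal (t / 2) < ENNReal.ofReal r then ENNReal.ofReal r else 0) =
          (Ioo 0 (2 * r)).indicator
            (fun t => ENNReal.ofReal (2 * r) * ENNReal.ofReal (t ^ (q - 2))) t := by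
        intro t ht
        have ht0 : (0 : ℝ) < t := ht
        by_cases htr : t < 2 * r
        · have h1 : ENNReal.ofReal (t / 2) < ENNReal.ofReal r :=
            (ENNReal.ofReal_lt_ofReal_iff (by linarith)).2 (by linarith)
          rw [if_pos h1, indicator_of_mem (show t ∈ Ioo 0 (2 * r) from ⟨ht0, htr⟩),
            ← ENNReal.ofReal_mul (by positivity), ← ENNReal.ofReal_mul (by positivity)]
          congr 1; ring
        · have h1 : ¬ ENNReal.ofReal (t / 2) < ENNReal.ofReal r :=
            not_lt.2 (ENNReal.ofReal_le_ofReal (by linarith))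
          rw [if_neg h1, indicator_of_notMem (fun h => htr h.2), mul_zero]
      rw [setLIntegral_congr_fun measurableSet_Ioi e6, setLIntegral_indicator measurableSet_Ioo,
        inter_eq_self_of_subset_left Ioo_subset_Ioi_self,
        lintegral_const_mul _ (by fun_prop), lintegral_Ioo_rpow (by linarith) (by linarith),
        ENNReal.ofReal_rpow_of_nonneg hr0 hq0.le, ← ENNReal.ofReal_mul (by linarith),
        ← ENNReal.ofReal_mul (by have : 0 < q - 1 := by linarith
                                 positivity)]
      congr 1
      rw [show q - 2 + 1 = q - 1 by ring]
      rcases hr0.eq_or_lt with h0 | h0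
      · rw [← h0, Real.zero_rpow hq0.ne']; simp
      · have h3 : (2 * r) * (2 * r) ^ (q - 1) = 2 ^ q * r ^ q := by
          rw [← Real.mul_rpow (by norm_num) hr0, mul_comm, ← Real.rpow_add_one (by positivity)]
          congr 1; ring
        rw [← mul_div_assoc, h3]; ring
    rw [lintegral_congr e5, lintegral_const_mul _ (hg.pow_const q), ← mul_assoc,
      ← ENNReal.ofReal_mul hq0.le]
    apply le_of_eq
    congr 2; ring
  · refine Measurable.aemeasurable ?_
    refine Measurable.mul (by fun_prop) ?_
    refine Measurable.ite (measurableSet_lt (by fun_prop) (hg.comp measurable_snd))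
      (hg.comp measurable_snd) measurable_const

end Abstract

/-! ### The vector-valued weak type inequality -/

section Abstract

variable {X ι : Type*} [MeasurableSpace X] [Countable ι] [MeasurableSpace ι]
  [MeasurableSingletonClass ι] {μ : Measure X} {lab : ℕ → X → ι}

lemma minkowski_avg {q : ℝ} (hq : 1 < q) (f : ℕ → X → ℝ≥0∞) (hf : ∀ i, Measurable (f i))
    (j : ℕ) (x : X) :
    ∑' i, avg μ lab j (f i) x ^ q ≤ avg μ lab j (fun y => (∑' i, f i y ^ q) ^ (1 / q)) x ^ q := by
  have := minkowski ((μ (fib lab j x))⁻¹ • μ.restrict (fib lab j x)) hq f hf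
  simp only [lintegral_smul_measure, smul_eq_mul] at this
  exact this

lemma avg_succ_le (hr : Refines lab) {D : ℝ≥0∞} (hD1 : 1 ≤ D) (hDt : D ≠ ∞)
    (hD : ∀ j x, μ (fib lab j x) ≤ D * μ (fib lab (j + 1) x)) (h : X → ℝ≥0∞) (j : ℕ) (x : X) :
    avg μ lab (j + 1) h x ≤ D * avg μ lab j h x := by
  have hD0 : D ≠ 0 := (zero_lt_one.trans_le hD1).ne'
  have hsub : fib lab (j + 1) x ⊆ fib lab j x := fun y hy => hr j y x hy
  have h1 : (μ (fib lab (j + 1) x))⁻¹ ≤ D * (μ (fib lab j x))⁻¹ := by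
    have := ENNReal.inv_le_inv.2 (hD j x)
    rw [ENNReal.mul_inv (Or.inl hD0) (Or.inl hDt)] at this
    calc (μ (fib lab (j + 1) x))⁻¹ = D * (D⁻¹ * (μ (fib lab (j + 1) x))⁻¹) := by
          rw [← mul_assoc, ENNReal.mul_inv_cancel hD0 hDt, one_mul]
      _ ≤ _ := by gcongr
  unfold avg
  rw [← mul_assoc]
  exact mul_le_mul' h1 (lintegral_mono_set hsub)

/-- The stopped average never overshoots the level `α` by more than the doubling constant. -/
lemma savg_le (hr : Refines lab) {D : ℝ≥0∞} (hD1 : 1 ≤ D) (hDt : D ≠ ∞)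
    (hD : ∀ j x, μ (fib lab j x) ≤ D * μ (fib lab (j + 1) x)) {h : X → ℝ≥0∞} {α : ℝ≥0∞}
    (h0 : ∀ x, avg μ lab 0 h x ≤ α) (N : ℕ) (x : X) : savg μ lab h α N h x ≤ D * α := by
  unfold savg
  rcases hs : stopLevel μ lab h α N x with _ | l
  · calc avg μ lab 0 h x ≤ 1 * α := by rw [one_mul]; exact h0 x
      _ ≤ D * α := by gcongr
  · refine (avg_succ_le hr hD1 hDt hD h l x).trans ?_
    gcongr
    exact avg_le_of_lt_stopLevel (N := N) (by omega)

/-- Where no average of `h` up to level `N` exceeds `α`, replacing a function by its stopped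
average does not change the averages up to level `N`. -/
lemma avg_savg [IsFiniteMeasure μ] (hm : ∀ j, Measurable (lab j)) (hr : Refines lab)
    {h : X → ℝ≥0∞} {α : ℝ≥0∞} {N : ℕ} {x : X} (hx : ∀ l ≤ N, avg μ lab l h x ≤ α)
    (g : X → ℝ≥0∞) {j : ℕ} (hj : j ≤ N) :
    avg μ lab j (savg μ lab h α N g) x = avg μ lab j g x := by
  have hS : Sat lab j (fib lab j x) := fun y z hyz hy => hyz.symm.trans hy
  have := setLIntegral_savg (μ := μ) (h := h) (α := α) (N := N) hm hr g hS ?_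
  · rw [avg, this, avg]
  · intro y hy
    by_contra hc
    rw [not_le] at hc
    have hy' : lab j y = lab j x := hy
    rcases stopLevel_mem (μ := μ) (lab := lab) (h := h) (α := α) (N := N) y with h3 | h3
    · omega
    · rw [avg_congr (hr.le hc.le hy')] at h3
      exact absurd (hx _ (hc.le.trans hj)) (not_le.2 h3)

/-- The Fefferman–Stein weak type `(1,1)` inequality for the maximal function over the first
levels. -/
lemma vv_weak_trunc [IsFiniteMeasure μ] (hm : ∀ j, Measurable (lab j)) (hr : Refines lab)
    {q : ℝ} (hq : 1 < q) {D : ℝ≥0∞} (hD1 : 1 ≤ D) (hDt : D ≠ ∞)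
    (hD : ∀ j x, μ (fib lab j x) ≤ D * μ (fib lab (j + 1) x))
    (f : ℕ → X → ℝ≥0∞) (hf : ∀ i, Measurable (f i)) {h : X → ℝ≥0∞}
    (hh : h = fun y => (∑' i, f i y ^ q) ^ (1 / q)) {α : ℝ≥0∞} (hα0 : α ≠ 0) (hαt : α ≠ ∞)
    (h0 : ∀ x, avg μ lab 0 h x ≤ α) (N : ℕ) :
    μ {x | α ^ q < ∑' i, (⨆ l : Fin (N + 1), avg μ lab l (f i) x) ^ q} ≤
      (1 + ENNReal.ofReal (q * 2 ^ q / (q - 1)) * D ^ (q - 1)) * (α⁻¹ * ∫⁻ x, h x ∂μ) := by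
  have hq0 : 0 < q := by linarith
  set C := ENNReal.ofReal (q * 2 ^ q / (q - 1)) with hC
  set g : ℕ → X → ℝ≥0∞ := fun i => savg μ lab h α N (f i) with hg
  have hgm : ∀ i, Measurable (g i) := fun i => measurable_savg hm hr _
  have hsum : ∀ x, ∑' i, g i x ^ q ≤ savg μ lab h α N h x ^ q := fun x => by
    have := minkowski_avg (μ := μ) (lab := lab) hq f hf (stopLevel μ lab h α N x) x
    rw [← hh] at this
    exact this
  have hsD : ∀ x, savg μ lab h α N h x ≤ D * α := savg_le hr hD1 hDt hD h0 N
  have hgD : ∀ i x, g i x ≤ D * α := fun i x => by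
    rw [← ENNReal.rpow_le_rpow_iff hq0]
    exact (ENNReal.le_tsum (f := fun i => g i x ^ q) i).trans
      ((hsum x).trans (ENNReal.rpow_le_rpow (hsD x) hq0.le))
  have hDα : D * α ≠ ∞ := ENNReal.mul_ne_top hDt hαt
  have hInt : ∑' i, ∫⁻ x, g i x ^ q ∂μ ≤ (D * α) ^ (q - 1) * ∫⁻ x, h x ∂μ := by
    rw [← lintegral_tsum fun i => ((hgm i).pow_const q).aemeasurable,
      ← lintegral_savg (h := h) (α := α) (N := N) hm hr h,
      ← lintegral_const_mul _ (measurable_savg hm hr h)]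
    refine lintegral_mono fun x => (hsum x).trans ?_
    conv_lhs => rw [show q = (q - 1) + 1 by ring]
    rw [ENNReal.rpow_add_of_nonneg _ _ (by linarith) zero_le_one, ENNReal.rpow_one]
    exact mul_le_mul' (ENNReal.rpow_le_rpow (hsD x) (by linarith)) le_rfl
  have hsub : {x | α ^ q < ∑' i, (⨆ l : Fin (N + 1), avg μ lab l (f i) x) ^ q} ⊆
      {x | ∃ l ≤ N, α < avg μ lab l h x} ∪
        {x | α ^ q ≤ ∑' i, (⨆ l : Fin (N + 1), avg μ lab l (g i) x) ^ q} := by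
    intro x hx
    by_cases hΩ : ∃ l ≤ N, α < avg μ lab l h x
    · exact Or.inl hΩ
    · right
      push Not at hΩ
      have hx' : α ^ q < ∑' i, (⨆ l : Fin (N + 1), avg μ lab l (f i) x) ^ q := hx
      have e : ∀ i, (⨆ l : Fin (N + 1), avg μ lab l (g i) x) =
          ⨆ l : Fin (N + 1), avg μ lab l (f i) x := fun i =>
        iSup_congr fun l => avg_savg hm hr hΩ (f i) (Nat.lt_succ_iff.1 l.2)
      simp only [mem_ofPred_eq, e]
      exact hx'.le
  have hαq0 : α ^ q ≠ 0 := by simp [ENNReal.rpow_eq_zero_iff, hα0, hαt]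
  have hαqt : α ^ q ≠ ∞ := ENNReal.rpow_ne_top_of_nonneg hq0.le hαt
  have hb1 : μ {x | ∃ l ≤ N, α < avg μ lab l h x} ≤ α⁻¹ * ∫⁻ x, h x ∂μ := by
    rw [mul_comm, ← div_eq_mul_inv, ENNReal.le_div_iff_mul_le (Or.inl hα0) (Or.inl hαt), mul_comm]
    exact weak_type hm hr h α N
  have hb2 : μ {x | α ^ q ≤ ∑' i, (⨆ l : Fin (N + 1), avg μ lab l (g i) x) ^ q} ≤
      C * D ^ (q - 1) * (α⁻¹ * ∫⁻ x, h x ∂μ) := by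
    have hMm : ∀ i, Measurable fun x => (⨆ l : Fin (N + 1), avg μ lab l (g i) x) ^ q := fun i =>
      (Measurable.iSup fun l : Fin (N + 1) => measurable_avg (hm l) (g i)).pow_const q
    refine (meas_ge_le_lintegral_div (Measurable.tsum hMm).aemeasurable hαq0 hαqt).trans ?_
    rw [ENNReal.div_le_iff hαq0 hαqt, lintegral_tsum fun i => (hMm i).aemeasurable]
    calc ∑' i, ∫⁻ x, (⨆ l : Fin (N + 1), avg μ lab l (g i) x) ^ q ∂μ
        ≤ ∑' i, C * ∫⁻ x, g i x ^ q ∂μ :=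
          ENNReal.tsum_le_tsum fun i => strong_type hm hr hq (hgm i) hDα (hgD i) N
      _ ≤ C * ((D * α) ^ (q - 1) * ∫⁻ x, h x ∂μ) := by
          rw [ENNReal.tsum_mul_left]; gcongr
      _ = C * D ^ (q - 1) * (α⁻¹ * ∫⁻ x, h x ∂μ) * α ^ q := by
          rw [ENNReal.mul_rpow_of_nonneg _ _ (by linarith), ENNReal.rpow_sub _ _ hα0 hαt,
            ENNReal.rpow_one, div_eq_mul_inv]
          ring
  calc _ ≤ _ := measure_mono hsub
    _ ≤ _ := measure_union_le _ _
    _ ≤ α⁻¹ * ∫⁻ x, h x ∂μ + C * D ^ (q - 1) * (α⁻¹ * ∫⁻ x, h x ∂μ) := add_le_add hb1 hb2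
    _ = _ := by ring

/-- The Fefferman–Stein weak type `(1,1)` inequality at levels `α` not below the averages of `h` at
level `0`. -/
lemma vv_weak [IsFiniteMeasure μ] (hm : ∀ j, Measurable (lab j)) (hr : Refines lab)
    {q : ℝ} (hq : 1 < q) {D : ℝ≥0∞} (hD1 : 1 ≤ D) (hDt : D ≠ ∞)
    (hD : ∀ j x, μ (fib lab j x) ≤ D * μ (fib lab (j + 1) x))
    (f : ℕ → X → ℝ≥0∞) (hf : ∀ i, Measurable (f i)) {h : X → ℝ≥0∞}
    (hh : h = fun y => (∑' i, f i y ^ q) ^ (1 / q)) {α : ℝ≥0∞} (hα0 : α ≠ 0) (hαt : α ≠ ∞)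
    (h0 : ∀ x, avg μ lab 0 h x ≤ α) :
    μ {x | α ^ q < ∑' i, (⨆ l : ℕ, avg μ lab l (f i) x) ^ q} ≤
      (1 + ENNReal.ofReal (q * 2 ^ q / (q - 1)) * D ^ (q - 1)) * (α⁻¹ * ∫⁻ x, h x ∂μ) := by
  have hq0 : 0 < q := by linarith
  have hmono : ∀ i x, Monotone fun N : ℕ => ⨆ l : Fin (N + 1), avg μ lab l (f i) x := by
    intro i x N N' hN
    refine iSup_le fun l => ?_
    exact le_iSup (fun l : Fin (N' + 1) => avg μ lab l (f i) x) ⟨l.1, by have := l.2; omega⟩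
  have hsup : ∀ i x, (⨆ l : ℕ, avg μ lab l (f i) x) =
      ⨆ N : ℕ, ⨆ l : Fin (N + 1), avg μ lab l (f i) x := by
    intro i x
    apply le_antisymm
    · refine iSup_le fun l => le_iSup_of_le l ?_
      exact le_iSup (fun l' : Fin (l + 1) => avg μ lab l' (f i) x) ⟨l, Nat.lt_succ_self l⟩
    · exact iSup_le fun N => iSup_le fun l => le_iSup (fun l : ℕ => avg μ lab l (f i) x) l
  have hU : {x | α ^ q < ∑' i, (⨆ l : ℕ, avg μ lab l (f i) x) ^ q} ⊆
      ⋃ N : ℕ, {x | α ^ q < ∑' i, (⨆ l : Fin (N + 1), avg μ lab l (f i) x) ^ q} := by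
    intro x hx
    have hx' : α ^ q < ∑' i, (⨆ l : ℕ, avg μ lab l (f i) x) ^ q := hx
    rw [ENNReal.tsum_eq_iSup_sum] at hx'
    obtain ⟨s, hs⟩ := lt_iSup_iff.1 hx'
    have ht : Tendsto (fun N : ℕ => ∑ i ∈ s, (⨆ l : Fin (N + 1), avg μ lab l (f i) x) ^ q) atTop
        (𝓝 (∑ i ∈ s, (⨆ l : ℕ, avg μ lab l (f i) x) ^ q)) := by
      refine tendsto_finsetSum _ fun i _ => ?_
      rw [hsup]
      exact (ENNReal.continuous_rpow_const.tendsto _).comp (tendsto_atTop_iSup (hmono i x))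
    obtain ⟨N, hN⟩ := (ht.eventually_const_lt hs).exists
    exact mem_iUnion.2 ⟨N, hN.trans_le (ENNReal.sum_le_tsum s)⟩
  refine (measure_mono hU).trans ?_
  rw [Monotone.measure_iUnion]
  · exact iSup_le fun N => vv_weak_trunc hm hr hq hD1 hDt hD f hf hh hα0 hαt h0 N
  · intro N N' hN x hx
    have hx' : α ^ q < ∑' i, (⨆ l : Fin (N + 1), avg μ lab l (f i) x) ^ q := hx
    refine hx'.trans_le (ENNReal.tsum_le_tsum fun i => ?_)
    exact ENNReal.rpow_le_rpow (hmono i x hN) hq0.le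

end Abstract

/-! ### Dyadic cubes -/

/-- The integer vector labelling the dyadic cube of generation `k + j` that contains `x`. -/
noncomputable def dlab (n : ℕ) (k : ℤ) (j : ℕ) (x : Fin n → ℝ) : Fin n → ℤ :=
  fun i => ⌊(2 : ℝ) ^ (k + j) * x i⌋

lemma mem_dyC {n : ℕ} {k : ℤ} {m : Fin n → ℤ} {x : Fin n → ℝ} :
    x ∈ dyC n k m ↔ ∀ i, ⌊(2 : ℝ) ^ k * x i⌋ = m i := by
  simp only [dyC, mem_univ_pi, mem_Ico]
  refine forall_congr' fun i => ?_
  have h2 : (0 : ℝ) < 2 ^ k := by positivity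
  rw [Int.floor_eq_iff, zpow_neg, inv_mul_le_iff₀ h2, lt_inv_mul_iff₀ h2]

lemma floor_refine {k k' : ℤ} (hk : k' ≤ k) {a b : ℝ}
    (h : ⌊(2 : ℝ) ^ k * a⌋ = ⌊(2 : ℝ) ^ k * b⌋) : ⌊(2 : ℝ) ^ k' * a⌋ = ⌊(2 : ℝ) ^ k' * b⌋ := by
  obtain ⟨d, rfl⟩ : ∃ d : ℕ, k = k' + d := ⟨(k - k').toNat, by omega⟩
  have e : ∀ c : ℝ, (2 : ℝ) ^ k' * c = ((2 : ℝ) ^ (k' + (d : ℤ)) * c) / ((2 ^ d : ℕ) : ℝ) := by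
    intro c
    rw [zpow_add₀ two_ne_zero, zpow_natCast]
    push_cast
    field_simp
  rw [e a, e b, Int.floor_div_natCast, Int.floor_div_natCast, h]

lemma measurable_dlab (n : ℕ) (k : ℤ) (j : ℕ) : Measurable (dlab n k j) :=
  measurable_pi_lambda _ fun i => Int.measurable_floor.comp (by fun_prop)

lemma refines_dlab (n : ℕ) (k : ℤ) : Refines (dlab n k) := by
  intro j x y h
  funext i
  exact floor_refine (by push_cast; omega) (congrFun h i)

lemma measurableSet_dyC (n : ℕ) (k : ℤ) (m : Fin n → ℤ) : MeasurableSet (dyC n k m) :=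
  MeasurableSet.univ_pi fun _ => measurableSet_Ico

lemma volume_dyC (n : ℕ) (k : ℤ) (m : Fin n → ℤ) :
    volume (dyC n k m) = ENNReal.ofReal ((2 : ℝ) ^ (-k)) ^ n := by
  rw [dyC, volume_pi_pi]
  have : ∀ i, volume (Ico ((2 : ℝ) ^ (-k) * m i) ((2 : ℝ) ^ (-k) * (m i + 1))) =
      ENNReal.ofReal ((2 : ℝ) ^ (-k)) := fun i => by
    rw [Real.volume_Ico]; congr 1; ring
  rw [Finset.prod_congr rfl fun i _ => this i]
  simp

lemma fib_dlab (n : ℕ) (k : ℤ) (j : ℕ) (x : Fin n → ℝ) :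
    fib (dlab n k) j x = dyC n (k + j) (dlab n k j x) := by
  ext y
  rw [mem_dyC]
  exact funext_iff

lemma fib_subset {n : ℕ} {k : ℤ} {m : Fin n → ℤ} {x : Fin n → ℝ} (hx : x ∈ dyC n k m) (j : ℕ) :
    fib (dlab n k) j x ⊆ dyC n k m := by
  intro y hy
  rw [mem_dyC] at hx ⊢
  intro i
  rw [← hx i]
  exact floor_refine (by omega) (congrFun (show dlab n k j y = dlab n k j x from hy) i)

lemma fib_disjoint {n : ℕ} {k : ℤ} {m : Fin n → ℤ} {x : Fin n → ℝ} (hx : x ∉ dyC n k m) (j : ℕ) :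
    fib (dlab n k) j x ∩ dyC n k m = ∅ := by
  ext y
  simp only [mem_inter_iff, mem_empty_iff_false, iff_false, not_and]
  intro hy hym
  exact hx (fib_subset hym j (show dlab n k j x = dlab n k j y from Eq.symm hy))

/-- Cubes inside `Q₀` do not see the restriction to `Q₀`. -/
lemma fib_restrict_of_mem {n : ℕ} {k : ℤ} {m : Fin n → ℤ} {x : Fin n → ℝ} (hx : x ∈ dyC n k m)
    (j : ℕ) : (volume.restrict (dyC n k m)).restrict (fib (dlab n k) j x) =
      volume.restrict (fib (dlab n k) j x) := by
  have hms : MeasurableSet (fib (dlab n k) j x) := by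
    rw [fib_dlab]; exact measurableSet_dyC _ _ _
  rw [Measure.restrict_restrict hms, inter_eq_self_of_subset_left (fib_subset hx j)]

open Classical in
lemma restrict_fib {n : ℕ} {k : ℤ} {m : Fin n → ℤ} (x : Fin n → ℝ) (j : ℕ) :
    (volume.restrict (dyC n k m)) (fib (dlab n k) j x) =
      if x ∈ dyC n k m then ENNReal.ofReal ((2 : ℝ) ^ (-(k + j))) ^ n else 0 := by
  rw [Measure.restrict_apply' (measurableSet_dyC n k m)]
  split_ifs with hx
  · rw [inter_eq_self_of_subset_left (fib_subset hx j), fib_dlab, volume_dyC]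
  · rw [fib_disjoint hx, measure_empty]

lemma doubling (n : ℕ) (k : ℤ) (m : Fin n → ℤ) (j : ℕ) (x : Fin n → ℝ) :
    (volume.restrict (dyC n k m)) (fib (dlab n k) j x) ≤
      ENNReal.ofReal ((2 : ℝ) ^ n) * (volume.restrict (dyC n k m)) (fib (dlab n k) (j + 1) x) := by
  rw [restrict_fib, restrict_fib]
  split_ifs with hx
  · rw [← ENNReal.ofReal_pow (by positivity), ← ENNReal.ofReal_pow (by positivity),
      ← ENNReal.ofReal_mul (by positivity), ← mul_pow]
    apply le_of_eq
    congr 2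
    rw [show (-(k + (j : ℤ))) = 1 + (-(k + ((j + 1 : ℕ) : ℤ))) by push_cast; ring,
      zpow_add₀ two_ne_zero, zpow_one]
  · exact zero_le

lemma ofReal_average_le {n : ℕ} (S : Set (Fin n → ℝ)) (f : (Fin n → ℝ) → ℝ) :
    ENNReal.ofReal (⨍ y in S, |f y|) ≤ (volume S)⁻¹ * ∫⁻ y in S, ENNReal.ofReal |f y| := by
  have h1 : ENNReal.ofReal (⨍ y in S, |f y|) ≤ ‖⨍ y in S, |f y|‖ₑ :=
    Real.ofReal_le_enorm _
  refine h1.trans ?_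
  unfold average
  refine (enorm_integral_le_lintegral_enorm _).trans ?_
  rw [lintegral_smul_measure, smul_eq_mul, Measure.restrict_apply_univ]
  gcongr with y
  rw [Real.enorm_eq_ofReal_abs, abs_abs]

/-- The contribution to the maximal function of the dyadic cubes containing `Q`. -/
noncomputable def bigMax (n : ℕ) (Q : Set (Fin n → ℝ)) (f : (Fin n → ℝ) → ℝ) : ℝ≥0∞ :=
  ⨆ (km : ℤ × (Fin n → ℤ)) (_ : Q ⊆ dyC n km.1 km.2), ENNReal.ofReal (⨍ y in dyC n km.1 km.2, |f y|)

lemma bigMax_le {n : ℕ} {Q : Set (Fin n → ℝ)} {x : Fin n → ℝ} (hx : x ∈ Q)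
    (f : (Fin n → ℝ) → ℝ) : bigMax n Q f ≤ dyMax n f x :=
  iSup_mono fun _ => iSup_le fun h => le_iSup_of_le (h hx) le_rfl

/-- On a dyadic cube `Q₀`, the maximal function is at most the maximum of a constant, from the cubes
containing `Q₀`, and of the localized maximal function. -/
lemma dyMax_le {n : ℕ} {k : ℤ} {m : Fin n → ℤ} {x : Fin n → ℝ} (hx : x ∈ dyC n k m)
    (f : (Fin n → ℝ) → ℝ) :
    dyMax n f x ≤ bigMax n (dyC n k m) f ⊔
      ⨆ l : ℕ, avg (volume.restrict (dyC n k m)) (dlab n k) l (fun y => ENNReal.ofReal |f y|) x := by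
  refine iSup_le fun km => iSup_le fun hkm => ?_
  rcases le_total km.1 k with hk | hk
  · refine le_sup_of_le_left ?_
    have hsub : dyC n k m ⊆ dyC n km.1 km.2 := by
      intro y hy
      rw [mem_dyC] at hx hy hkm ⊢
      intro i
      rw [← hkm i]
      exact floor_refine hk ((hy i).trans (hx i).symm)
    exact le_iSup₂_of_le km hsub le_rfl
  · refine le_sup_of_le_right ?_
    obtain ⟨l, hl⟩ : ∃ l : ℕ, km.1 = k + l := ⟨(km.1 - k).toNat, by omega⟩
    have hfib : dyC n km.1 km.2 = fib (dlab n k) l x := by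
      rw [fib_dlab, hl]
      congr 1
      rw [mem_dyC, hl] at hkm
      exact (funext hkm).symm
    refine le_iSup_of_le l ?_
    rw [hfib, avg, fib_restrict_of_mem hx, Measure.restrict_apply' (measurableSet_dyC n k m),
      inter_eq_self_of_subset_left (fib_subset hx l)]
    exact ofReal_average_le _ f

/-- The oscillation is controlled with `c` the constant contributed by the cubes containing `Q₀`. -/
lemma osc_pointwise {n : ℕ} {q : ℝ} (hq : 1 < q) {k : ℤ} {m : Fin n → ℤ} {x : Fin n → ℝ}
    (hx : x ∈ dyC n k m) (f : ℕ → (Fin n → ℝ) → ℝ) :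
    (dyVvMaxPow n q f x - ∑' i, bigMax n (dyC n k m) (f i) ^ q) ⊔
      (∑' i, bigMax n (dyC n k m) (f i) ^ q - dyVvMaxPow n q f x) ≤
    ∑' i, (⨆ l : ℕ, avg (volume.restrict (dyC n k m)) (dlab n k) l
      (fun y => ENNReal.ofReal |f i y|) x) ^ q := by
  have hq0 : 0 ≤ q := by linarith
  refine sup_le ?_ ?_
  · rw [tsub_le_iff_left, ← ENNReal.tsum_add]
    refine ENNReal.tsum_le_tsum fun i => ?_
    refine (ENNReal.rpow_le_rpow (dyMax_le hx (f i)) hq0).trans ?_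
    rcases le_total (bigMax n (dyC n k m) (f i)) (⨆ l : ℕ, avg (volume.restrict (dyC n k m))
      (dlab n k) l (fun y => ENNReal.ofReal |f i y|) x) with h | h
    · rw [sup_eq_right.2 h]; exact le_add_self
    · rw [sup_eq_left.2 h]; exact le_self_add
  · rw [tsub_eq_zero_of_le]
    · exact zero_le
    · exact ENNReal.tsum_le_tsum fun i => ENNReal.rpow_le_rpow (bigMax_le hx (f i)) hq0

/-- At level `0` the cell is `Q₀` itself (or a null set, when `x ∉ Q₀`). -/
lemma avg_zero_le {n : ℕ} {k : ℤ} {m : Fin n → ℤ} (h : (Fin n → ℝ) → ℝ≥0∞) (x : Fin n → ℝ) :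
    avg (volume.restrict (dyC n k m)) (dlab n k) 0 h x ≤
      (volume (dyC n k m))⁻¹ * ∫⁻ y in dyC n k m, h y := by
  by_cases hx : x ∈ dyC n k m
  · have : fib (dlab n k) 0 x = dyC n k m := by
      refine (fib_subset hx 0).antisymm fun y hy => ?_
      rw [mem_dyC] at hx hy
      funext i
      simpa [dlab] using (hy i).trans (hx i).symm
    rw [avg, this, Measure.restrict_restrict (measurableSet_dyC n k m), inter_self,
      Measure.restrict_apply_self]
  · have h0 : (volume.restrict (dyC n k m)) (fib (dlab n k) 0 x) = 0 := by
      rw [restrict_fib, if_neg hx]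
    rw [avg, setLIntegral_measure_zero _ _ h0, mul_zero]
    exact zero_le

end DyVV

/-- Local mean oscillation bound for the `q`-th power of the dyadic vector-valued
maximal operator: `ω_λ((M̄_q^d f)^q, Q₀) ≤ (C/λ^q) (⨍_{Q₀} ‖f‖_{ℓ^q})^q` whenever
`‖f(·)‖_{ℓ^q} ∈ L¹(ℝ^n)` and `Q₀` is a dyadic cube. -/
theorem dyadic_vv_maximal_local_osc (n : ℕ) (q : ℝ) (hq : 1 < q) :
    ∃ C : ℝ, 0 < C ∧
      ∀ lam : ℝ, 0 < lam → lam < 1 →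
        ∀ f : ℕ → (Fin n → ℝ) → ℝ, (∀ i, Measurable (f i)) →
          (∫⁻ x, lqNorm n q f x) < ∞ →
          ∀ (k : ℤ) (m : Fin n → ℤ),
            localOscE n lam (dyVvMaxPow n q f) (dyC n k m) ≤
              ENNReal.ofReal (C / lam ^ q) *
                ((volume (dyC n k m))⁻¹ * ∫⁻ x in dyC n k m, lqNorm n q f x) ^ q := by
  have hq0 : 0 < q := by linarith
  have hq1 : 0 < q - 1 := by linarith
  set Kr : ℝ := 1 + q * 2 ^ q / (q - 1) * ((2 : ℝ) ^ n) ^ (q - 1) with hKr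
  have hKr1 : 1 ≤ Kr := le_add_of_nonneg_right (by positivity)
  have hKr0 : 0 < Kr := by linarith
  refine ⟨Kr ^ q, by positivity, ?_⟩
  intro lam hlam0 hlam1 f hf _ k m
  set Q := dyC n k m with hQ
  set h : (Fin n → ℝ) → ℝ≥0∞ := lqNorm n q f with hh
  set A : ℝ≥0∞ := (volume Q)⁻¹ * ∫⁻ x in Q, h x with hA
  have hL0 : ENNReal.ofReal lam ≠ 0 := by simpa using hlam0
  have hLt : ENNReal.ofReal lam ≠ ∞ := ENNReal.ofReal_ne_top
  have hvol : volume Q = ENNReal.ofReal ((2 : ℝ) ^ (-k)) ^ n := DyVV.volume_dyC n k m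
  have hv0 : volume Q ≠ 0 := by
    rw [hvol]
    exact pow_ne_zero _ (by simp only [ne_eq, ENNReal.ofReal_eq_zero, not_le]; positivity)
  have hvt : volume Q ≠ ∞ := by
    rw [hvol]
    exact ENNReal.pow_ne_top ENNReal.ofReal_ne_top
  have : IsFiniteMeasure (volume.restrict Q) := ⟨by
    rw [Measure.restrict_apply_univ]; exact hvt.lt_top⟩
  have hInt : ∫⁻ x in Q, h x = volume Q * A := by
    rw [hA, ← mul_assoc, ENNReal.mul_inv_cancel hv0 hvt, one_mul]
  have hRHS : ENNReal.ofReal (Kr ^ q / lam ^ q) * A ^ q =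
      (ENNReal.ofReal Kr * A / ENNReal.ofReal lam) ^ q := by
    rw [← Real.div_rpow hKr0.le hlam0.le, ← ENNReal.ofReal_rpow_of_nonneg (by positivity) hq0.le,
      ← ENNReal.mul_rpow_of_nonneg _ _ hq0.le, ENNReal.ofReal_div_of_pos hlam0]
    congr 1
    simp only [div_eq_mul_inv]
    ring
  rw [hRHS]
  -- every finite `b = α ^ q` above the right-hand side is admissible in the rearrangement
  refine le_of_forall_gt_imp_ge_of_dense fun b hb => ?_
  rcases eq_or_ne b ∞ with rfl | hbt
  · exact le_top
  set α := b ^ (1 / q) with hα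
  have hαq : α ^ q = b := by
    rw [hα, one_div, ENNReal.rpow_inv_rpow hq0.ne']
  have hαlt : ENNReal.ofReal Kr * A / ENNReal.ofReal lam < α := by
    rw [← hαq] at hb
    exact (ENNReal.rpow_lt_rpow_iff hq0).1 hb
  have hα0 : α ≠ 0 := (zero_le.trans_lt hαlt).ne'
  have hαt : α ≠ ∞ := ENNReal.rpow_ne_top_of_nonneg (by positivity) hbt
  have hlt : ENNReal.ofReal Kr * A < α * ENNReal.ofReal lam :=
    (ENNReal.div_lt_iff (Or.inl hL0) (Or.inl hLt)).1 hαlt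
  have hAα : A ≤ α := by
    calc A = 1 * A := (one_mul A).symm
      _ ≤ ENNReal.ofReal Kr * A := by
          gcongr
          rw [← ENNReal.ofReal_one]
          exact ENNReal.ofReal_le_ofReal hKr1
      _ ≤ α * ENNReal.ofReal lam := hlt.le
      _ ≤ α * 1 := by
          gcongr
          rw [← ENNReal.ofReal_one]
          exact ENNReal.ofReal_le_ofReal hlam1.le
      _ = α := mul_one α
  have hb0 : b ≠ 0 := by
    rw [← hαq]
    simp [ENNReal.rpow_eq_zero_iff, hα0, hαt]
  have hbr : ENNReal.ofReal b.toReal = b := ENNReal.ofReal_toReal hbt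
  have hweak := DyVV.vv_weak (μ := volume.restrict Q) (lab := DyVV.dlab n k)
    (DyVV.measurable_dlab n k) (DyVV.refines_dlab n k) hq
    (D := ENNReal.ofReal ((2 : ℝ) ^ n))
    (by rw [← ENNReal.ofReal_one]
        exact ENNReal.ofReal_le_ofReal (one_le_pow₀ one_le_two))
    ENNReal.ofReal_ne_top (DyVV.doubling n k m)
    (fun i y => ENNReal.ofReal |f i y|) (fun i => by have := hf i; fun_prop)
    (h := h) rfl hα0 hαt (fun x => (DyVV.avg_zero_le h x).trans hAα)
  have hK : 1 + ENNReal.ofReal (q * 2 ^ q / (q - 1)) * ENNReal.ofReal ((2 : ℝ) ^ n) ^ (q - 1) =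
      ENNReal.ofReal Kr := by
    rw [ENNReal.ofReal_rpow_of_nonneg (by positivity) hq1.le,
      ← ENNReal.ofReal_mul (by positivity), ← ENNReal.ofReal_one,
      ← ENNReal.ofReal_add zero_le_one (by positivity)]
  rw [hK, hInt, hαq] at hweak
  refine (iInf_le _ (∑' i, DyVV.bigMax n Q (f i) ^ q)).trans ?_
  refine sInf_le ⟨b.toReal, ENNReal.toReal_pos hb0 hbt, hbr.symm, ?_⟩
  rw [hbr]
  refine lt_of_le_of_lt (le_trans ?_ hweak) ?_
  · rw [Measure.restrict_apply' (DyVV.measurableSet_dyC n k m)]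
    refine measure_mono fun x hx => ?_
    have hx' : b < Q.indicator (fun y =>
        (dyVvMaxPow n q f y - ∑' i, DyVV.bigMax n Q (f i) ^ q) ⊔
          (∑' i, DyVV.bigMax n Q (f i) ^ q - dyVvMaxPow n q f y)) x := hx
    by_cases hxQ : x ∈ Q
    · rw [indicator_of_mem hxQ] at hx'
      exact ⟨hx'.trans_le (DyVV.osc_pointwise hq hxQ f), hxQ⟩
    · rw [indicator_of_notMem hxQ] at hx'
      exact absurd hx' not_lt_zero
  · calc ENNReal.ofReal Kr * (α⁻¹ * (volume Q * A))
        = ENNReal.ofReal Kr * A / α * volume Q := by rw [div_eq_mul_inv]; ring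
      _ < ENNReal.ofReal lam * volume Q := by
          refine (ENNReal.mul_lt_mul_iff_left hv0 hvt).2 ?_
          rw [ENNReal.div_lt_iff (Or.inl hα0) (Or.inl hαt), mul_comm (ENNReal.ofReal lam)]
          exact hlt
end
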